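/- arXiv:0812.2093 — 2 statements merged into one kernel-verified Lean document; each statement's English description precedes it below -/
import Mathlib

section
/- There exists a finitely generated torsion group G that is not unitarizable (hence contains no non-abelian free subgroup) and is weakly amenable: for every ε > 0 there exist a finite generating set X of G and a unit vector u in ℓ²(G) such that ‖λ(x)u − u‖ < ε for every x ∈ X, where λ denotes the left regular representation of G on ℓ²(G) given by (λ(x)u)(h) = u(x⁻¹h). -/
/-- A representation of a group `G` on a complex inner product space `E`
(a homomorphism into the group of invertible continuous linear operators on `E`)
is *uniformly bounded* if the operator norms `‖π g‖` are bounded. -/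
def UniformlyBoundedRep {G : Type*} [Group G] {E : Type*} [NormedAddCommGroup E]
    [InnerProductSpace ℂ E] (π : G →* (E ≃L[ℂ] E)) : Prop :=
  ∃ C : ℝ, ∀ g : G, ‖((π g : E ≃L[ℂ] E) : E →L[ℂ] E)‖ ≤ C

/-- A representation `π` is *unitarizable* if there is a continuous linear automorphism
`S` of `E` such that `g ↦ S⁻¹ π(g) S` is a unitary operator for every `g` (being an
invertible continuous linear map, it is unitary iff it is an isometry). -/
def IsUnitarizableRep {G : Type*} [Group G] {E : Type*} [NormedAddCommGroup E]
    [InnerProductSpace ℂ E] (π : G →* (E ≃L[ℂ] E)) : Prop :=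
  ∃ S : E ≃L[ℂ] E, ∀ g : G, ∀ v : E, ‖S.symm (π g (S v))‖ = ‖v‖

/-- A group `G` is *unitarizable* if every uniformly bounded representation of `G`
on every complex Hilbert space is unitarizable. -/
def Unitarizable (G : Type*) [Group G] : Prop :=
  ∀ (E : Type) [NormedAddCommGroup E] [InnerProductSpace ℂ E] [CompleteSpace E]
    (π : G →* (E ≃L[ℂ] E)), UniformlyBoundedRep π → IsUnitarizableRep π


/-- The left regular representation of `G` on `ℓ²(G)`: `(λ(x)u)(h) = u(x⁻¹ h)`. -/
noncomputable def leftRegular {G : Type*} [Group G] (x : G)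
    (u : lp (fun _ : G => ℂ) 2) : lp (fun _ : G => ℂ) 2 :=
  ⟨fun h => u (x⁻¹ * h), by
    have hu : Memℓp (⇑u) 2 := lp.memℓp u
    have hs : Summable fun i : G => ‖u i‖ ^ (2 : ENNReal).toReal :=
      (memℓp_gen_iff (by norm_num)).mp hu
    exact memℓp_gen (((Equiv.mulLeft x⁻¹).summable_iff
      (f := fun h : G => ‖u h‖ ^ (2 : ENNReal).toReal)).mpr hs)⟩

/-!
Orient the Cayley graph of a group `H`, with respect to an infinite sequence, so that every vertex
is used a bounded number of times. The adjacency matrix of the oriented graph may be unbounded on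
`ℓ²(H)`, but its commutators with the regular representation are uniformly bounded and form a
derivation. Were `H` unitarizable, this derivation would be inner, so that a bounded perturbation of
the matrix would commute with the regular representation; as its rows are square summable, so would
be its columns, and only finitely many edges could point to `1`.

A torsion group with such an orientation is obtained from the free group on `ℕ` by imposing the
relators `w n ^ p ^ (n + 1)`, where `w` enumerates the free group, in a tower of finite `p`-groups:
at each level the Fox derivatives of the relators span a space of dimension at most the order of the
group, which bounds the number of edges of a finite subgraph by twice the number of its vertices,
and Hall's marriage theorem applies.

To gain weak amenability, let `A` be the Grigorchuk group, which is a finitely generated infinite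
torsion group of subexponential growth, so that `ℓ²(A)` contains almost invariant vectors. Write the
elements of `H ≀ᵣ A₅` as lamp values along a sparse sequence in `A`. As `A₅` is perfect and every
value recurs infinitely often, `A` and the lamps from index `k` on generate a torsion group that
does not depend on `k`. For large `k` the conjugates of these lamps by a given finite subset of `A`
commute and generate a finite group, so that the almost invariant vectors of `A` can be induced. The
orientation of `H` is pulled back along the value of the lamp at the cursor.
-/

/-! ### Bounded orientations -/

/-- An assignment of the edges `(x, i)` of the Cayley graph of `G` with respect to `s` to their
endpoints `x` and `x * s i`, each vertex being used at most `C` times. -/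
structure BoundedOrientation {G ι : Type*} [Mul G] (s : ι → G) (C : ℕ) where
  slot : G × ι → G × Fin C
  injective : Function.Injective slot
  fst_slot : ∀ x i, (slot (x, i)).1 = x ∨ (slot (x, i)).1 = x * s i

namespace BoundedOrientation

lemma nonempty_of_card_le {G ι : Type*} [Mul G] [DecidableEq G] {s : ι → G} {C : ℕ}
    (h : ∀ A : Finset (G × ι),
      A.card ≤ C * (A.image Prod.fst ∪ A.image fun a => a.1 * s a.2).card) :
    Nonempty (BoundedOrientation s C) := by
  let ends : G × ι → Finset (G × Fin C) := fun a => {a.1, a.1 * s a.2} ×ˢ Finset.univ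
  obtain ⟨o, ho, hmem⟩ := (Finset.all_card_le_biUnion_card_iff_exists_injective ends).1 fun A =>
    calc A.card ≤ C * (A.image Prod.fst ∪ A.image fun a => a.1 * s a.2).card := h A
      _ = ((A.image Prod.fst ∪ A.image fun a => a.1 * s a.2) ×ˢ
          (Finset.univ : Finset (Fin C))).card := by
        rw [Finset.card_product, Finset.card_univ, Fintype.card_fin, mul_comm]
      _ ≤ (A.biUnion ends).card := Finset.card_le_card fun x hx => by
        simp only [ends, Finset.mem_product, Finset.mem_union, Finset.mem_image,
          Finset.mem_biUnion, Finset.mem_insert, Finset.mem_singleton] at hx ⊢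
        rcases hx with ⟨⟨a, ha, hax⟩ | ⟨a, ha, hax⟩, hx2⟩
        exacts [⟨a, ha, Or.inl hax.symm, hx2⟩, ⟨a, ha, Or.inr hax.symm, hx2⟩]
  exact ⟨⟨o, ho, fun x i => by simpa [ends] using hmem (x, i)⟩⟩

end BoundedOrientation

local notation "ℓ²(" G ")" => lp (fun _ : G => ℂ) 2

/-! ### The left regular representation -/

section LeftRegular

variable {G : Type*} [Group G]

lemma norm_leftRegular (g : G) (u : ℓ²(G)) : ‖leftRegular g u‖ = ‖u‖ := by
  have h2 : 0 < (2 : ENNReal).toReal := by norm_num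
  rw [lp.norm_eq_tsum_rpow h2, lp.norm_eq_tsum_rpow h2]
  congr 1
  exact (Equiv.mulLeft g⁻¹).tsum_eq fun h => ‖u h‖ ^ (2 : ENNReal).toReal

/-- The left regular representation as a homomorphism into the algebra of bounded operators. -/
noncomputable def regularRep (G : Type*) [Group G] : G →* (ℓ²(G) →L[ℂ] ℓ²(G)) where
  toFun g := LinearMap.mkContinuous
    { toFun := leftRegular g
      map_add' := fun _ _ => rfl
      map_smul' := fun _ _ => rfl } 1 fun u => by
    rw [one_mul]
    exact (norm_leftRegular g u).le
  map_one' := by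
    ext u x
    change u (1⁻¹ * x) = u x
    rw [inv_one, one_mul]
  map_mul' g h := by
    ext u x
    change u ((g * h)⁻¹ * x) = u (h⁻¹ * (g⁻¹ * x))
    rw [mul_inv_rev, mul_assoc]

lemma regularRep_apply (g : G) (u : ℓ²(G)) (x : G) : regularRep G g u x = u (g⁻¹ * x) := rfl

lemma norm_regularRep_le (g : G) : ‖regularRep G g‖ ≤ 1 :=
  ContinuousLinearMap.opNorm_le_bound _ zero_le_one fun u => by
    rw [one_mul]
    exact (norm_leftRegular g u).le

lemma regularRep_single [DecidableEq G] (g y : G) :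
    regularRep G g (lp.single 2 y 1) = lp.single 2 (g * y) 1 := by
  ext x
  rw [regularRep_apply]
  simp only [lp.single_apply, Pi.single_apply, inv_mul_eq_iff_eq_mul]

end LeftRegular

/-! ### Derivations of unitarizable groups -/

namespace Unitarizable

variable {G : Type*} [Group G] {E : Type} [NormedAddCommGroup E] [InnerProductSpace ℂ E]
  [CompleteSpace E] {F : Type*} [NormedAddCommGroup F] [NormedSpace ℂ F]

lemma exists_isometric_conj (hG : Unitarizable G) (e : E ≃L[ℂ] F) (φ : G →* (F →L[ℂ] F))
    (hφ : ∃ C, ∀ g, ‖φ g‖ ≤ C) :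
    ∃ f : E ≃L[ℂ] F, ∀ g v, ‖f.symm (φ g (f v))‖ = ‖v‖ := by
  let π : G →* (E ≃L[ℂ] E) := (ContinuousLinearEquiv.unitsEquiv ℂ E).toMonoidHom.comp
    (((e.symm.conjContinuousAlgEquiv : _ →* (E →L[ℂ] E)).comp φ).toHomUnits)
  have hπ (g : G) : (π g : E →L[ℂ] E) = (e.symm : F →L[ℂ] E) ∘L φ g ∘L (e : E →L[ℂ] F) := rfl
  obtain ⟨C, hC⟩ := hφ
  obtain ⟨S, hS⟩ := hG E π ⟨‖(e.symm : F →L[ℂ] E)‖ * (C * ‖(e : E →L[ℂ] F)‖), fun g => by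
    rw [hπ]
    refine (ContinuousLinearMap.opNorm_comp_le _ _).trans ?_
    gcongr
    refine (ContinuousLinearMap.opNorm_comp_le _ _).trans ?_
    gcongr
    exact hC g⟩
  exact ⟨S.trans e, hS⟩

lemma exists_equivariant_projection (hG : Unitarizable G) (e : E ≃L[ℂ] F)
    (φ : G →* (F →L[ℂ] F)) (hφ : ∃ C, ∀ g, ‖φ g‖ ≤ C) {W : Submodule ℂ F}
    (hW : IsClosed (W : Set F)) (hinv : ∀ g, ∀ w ∈ W, φ g w ∈ W) :
    ∃ P : F →L[ℂ] F, (∀ v, P v ∈ W) ∧ (∀ w ∈ W, P w = w) ∧ ∀ g v, P (φ g v) = φ g (P v) := by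
  obtain ⟨f, hf⟩ := hG.exists_isometric_conj e φ hφ
  let U (g : G) : E →ₗᵢ[ℂ] E :=
    ⟨((f.symm : F →L[ℂ] E) ∘L φ g ∘L (f : E →L[ℂ] F)).toLinearMap, hf g⟩
  have hU (g : G) (v : E) : f (U g v) = φ g (f v) := f.apply_symm_apply _
  have hUU (g : G) (v : E) : U g (U g⁻¹ v) = v := f.injective <| by
    rw [hU, hU, ← mul_apply_eq_comp, ← map_mul, mul_inv_cancel, map_one,
      one_apply_eq_self]
  let V : Submodule ℂ E := W.comap f.toLinearMap
  have hUV (g : G) (v : E) (hv : v ∈ V) : U g v ∈ V := by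
    rw [Submodule.mem_comap]
    exact (hU g v).symm ▸ hinv g _ hv
  have : CompleteSpace V := (hW.preimage f.continuous).completeSpace_coe
  have hcomm (g : G) (v : E) : V.starProjection (U g v) = U g (V.starProjection v) := by
    refine Submodule.eq_starProjection_of_mem_of_inner_eq_zero
      (hUV g _ (Submodule.starProjection_apply_mem _ _)) fun w hw => ?_
    rw [← map_sub, ← hUU g w, (U g).inner_map_map]
    exact Submodule.starProjection_inner_eq_zero _ _ (hUV g⁻¹ w hw)
  refine ⟨(f : E →L[ℂ] F) ∘L V.starProjection ∘L (f.symm : F →L[ℂ] E),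
    fun v => Submodule.starProjection_apply_mem V _, fun w hw => ?_, fun g v => ?_⟩
  · change f (V.starProjection (f.symm w)) = w
    rw [Submodule.starProjection_eq_self_iff.2, f.apply_symm_apply]
    rw [Submodule.mem_comap]
    exact (f.apply_symm_apply w).symm ▸ hw
  · change f (V.starProjection (f.symm (φ g v))) = φ g (f (V.starProjection (f.symm v)))
    rw [← hU, ← hcomm, f.symm_apply_eq.2 ((hU g (f.symm v)).trans
      (by rw [f.apply_symm_apply])).symm]

end Unitarizable

section Derivation

variable {G : Type*} [Group G] {E : Type*} [NormedAddCommGroup E] [NormedSpace ℂ E]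

/-- The representation by the block matrices with diagonal blocks `π g` and upper right block
`D g`; the identity `hD` saying that `D` is a derivation is what makes it multiplicative. -/
def triangularRep (π : G →* (E →L[ℂ] E)) (D : G → E →L[ℂ] E)
    (hD : ∀ g h, D (g * h) = D g * π h + π g * D h) : G →* (E × E →L[ℂ] E × E) where
  toFun g := (π g ∘L .fst ℂ E E + D g ∘L .snd ℂ E E).prod (π g ∘L .snd ℂ E E)
  map_one' := by
    have h1 : D 1 = 0 := by simpa using hD 1 1
    ext v <;> simp [h1]
  map_mul' g h := by
    ext v <;> simp [hD, add_comm]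

variable {π : G →* (E →L[ℂ] E)} {D : G → E →L[ℂ] E}
  (hD : ∀ g h, D (g * h) = D g * π h + π g * D h)

lemma triangularRep_apply (g : G) (z : E × E) :
    triangularRep π D hD g z = (π g z.1 + D g z.2, π g z.2) := rfl

lemma norm_triangularRep_le {C C' : ℝ} (hC : ∀ g, ‖π g‖ ≤ C) (hC' : ∀ g, ‖D g‖ ≤ C') (g : G) :
    ‖triangularRep π D hD g‖ ≤ C + C' := by
  have hC0 : 0 ≤ C := (norm_nonneg _).trans (hC g)
  have hC0' : 0 ≤ C' := (norm_nonneg _).trans (hC' g)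
  refine ContinuousLinearMap.opNorm_le_bound _ (by positivity) fun z => ?_
  have hπ (v : E) (hv : ‖v‖ ≤ ‖z‖) : ‖π g v‖ ≤ C * ‖z‖ := (π g).le_of_opNorm_le_of_le (hC g) hv
  rw [triangularRep_apply, add_mul]
  refine norm_prod_le_iff.2 ⟨norm_add_le_of_le (hπ _ (norm_fst_le z)) ?_,
    (hπ _ (norm_snd_le z)).trans (le_add_of_nonneg_right (by positivity))⟩
  exact (D g).le_of_opNorm_le_of_le (hC' g) (norm_snd_le z)

end Derivation

lemma Unitarizable.exists_eq_commutator {G : Type*} [Group G] (hG : Unitarizable G) {E : Type}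
    [NormedAddCommGroup E] [InnerProductSpace ℂ E] [CompleteSpace E] {π : G →* (E →L[ℂ] E)}
    (hπ : ∃ C, ∀ g, ‖π g‖ ≤ C) {D : G → E →L[ℂ] E}
    (hD : ∀ g h, D (g * h) = D g * π h + π g * D h) (hbound : ∃ C, ∀ g, ‖D g‖ ≤ C) :
    ∃ Z : E →L[ℂ] E, ∀ g, D g = π g * Z - Z * π g := by
  obtain ⟨C, hC⟩ := hπ
  obtain ⟨C', hC'⟩ := hbound
  let W : Submodule ℂ (E × E) := LinearMap.ker (ContinuousLinearMap.snd ℂ E E).toLinearMap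
  have hW (z : E × E) : z ∈ W ↔ z.2 = 0 := Iff.rfl
  obtain ⟨P, hPW, hPfix, hPcomm⟩ := hG.exists_equivariant_projection
    (WithLp.prodContinuousLinearEquiv 2 ℂ E E) (triangularRep π D hD)
    ⟨C + C', norm_triangularRep_le hD hC hC'⟩ (W := W) (isClosed_singleton.preimage continuous_snd)
    fun g z hz => by
      rw [hW] at hz ⊢
      rw [triangularRep_apply, hz]
      exact map_zero _
  refine ⟨.fst ℂ E E ∘L P ∘L .inr ℂ E E, fun g => ContinuousLinearMap.ext fun v => ?_⟩
  have h := hPcomm g (0, v)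
  rw [triangularRep_apply, triangularRep_apply, (hW _).1 (hPW _), map_zero, map_zero, add_zero,
    zero_add, ← zero_add (π g v), ← add_zero (D g v), ← Prod.mk_add_mk, map_add,
    hPfix (D g v, 0) rfl] at h
  exact eq_sub_of_add_eq (congrArg Prod.fst h)

/-! ### Bounded orientations obstruct unitarizability -/

section Schur

open Finset

variable {α β : Type*} [DecidableEq β] {C : ℕ} {ρ : α → Finset β}

lemma sum_norm_sum_rpow_le (hrow : ∀ x, #(ρ x) ≤ C)
    (hcol : ∀ (y : β) (F : Finset α), #{x ∈ F | y ∈ ρ x} ≤ C) (u : ℓ²(β)) (F : Finset α) :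
    ∑ x ∈ F, ‖∑ y ∈ ρ x, u y‖ ^ (2 : ENNReal).toReal ≤ (C * ‖u‖) ^ (2 : ENNReal).toReal := by
  have h2 : (2 : ENNReal).toReal = ((2 : ℕ) : ℝ) := by norm_num
  have hu := lp.sum_rpow_le_norm_rpow (p := 2) (by norm_num) u (F.biUnion ρ)
  simp only [h2, Real.rpow_natCast] at hu ⊢
  calc ∑ x ∈ F, ‖∑ y ∈ ρ x, u y‖ ^ 2
      ≤ ∑ x ∈ F, C * ∑ y ∈ ρ x, ‖u y‖ ^ 2 := by
        refine sum_le_sum fun x _ => ?_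
        calc ‖∑ y ∈ ρ x, u y‖ ^ 2 ≤ (∑ y ∈ ρ x, ‖u y‖) ^ 2 := by
              gcongr; exact norm_sum_le _ _
          _ ≤ #(ρ x) * ∑ y ∈ ρ x, ‖u y‖ ^ 2 := sq_sum_le_card_mul_sum_sq
          _ ≤ C * ∑ y ∈ ρ x, ‖u y‖ ^ 2 := by gcongr; exact hrow x
    _ = C * ∑ y ∈ F.biUnion ρ, ∑ x ∈ F with y ∈ ρ x, ‖u y‖ ^ 2 := by
        rw [← mul_sum]
        refine congrArg _ (sum_comm' fun x y => ?_)
        simp only [mem_filter, mem_biUnion]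
        exact ⟨fun h => ⟨h, x, h⟩, fun h => h.1⟩
    _ ≤ C * ∑ y ∈ F.biUnion ρ, C * ‖u y‖ ^ 2 := by
        gcongr with y _
        rw [sum_const, nsmul_eq_mul]
        gcongr
        exact hcol y F
    _ = C * C * ∑ y ∈ F.biUnion ρ, ‖u y‖ ^ 2 := by rw [← mul_sum, mul_assoc]
    _ ≤ C * C * ‖u‖ ^ 2 := by gcongr
    _ = (C * ‖u‖) ^ 2 := by ring

/-- The operator whose matrix is the indicator function of the relation `y ∈ ρ x`, when each row
and each column of this matrix has at most `C` nonzero entries. -/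
noncomputable def schurCLM (ρ : α → Finset β) (C : ℕ) (hrow : ∀ x, #(ρ x) ≤ C)
    (hcol : ∀ (y : β) (F : Finset α), #{x ∈ F | y ∈ ρ x} ≤ C) : ℓ²(β) →L[ℂ] ℓ²(α) :=
  LinearMap.mkContinuous
    { toFun := fun u => ⟨fun x => ∑ y ∈ ρ x, u y,
        memℓp_gen' fun F => sum_norm_sum_rpow_le hrow hcol u F⟩
      map_add' := fun u v => by
        ext x
        exact sum_add_distrib
      map_smul' := fun a u => by
        ext x
        exact (mul_sum _ _ _).symm } C fun u =>
    lp.norm_le_of_forall_sum_le (by norm_num) (by positivity)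
      fun F => sum_norm_sum_rpow_le hrow hcol u F

lemma norm_schurCLM_le (hrow : ∀ x, #(ρ x) ≤ C)
    (hcol : ∀ (y : β) (F : Finset α), #{x ∈ F | y ∈ ρ x} ≤ C) : ‖schurCLM ρ C hrow hcol‖ ≤ C :=
  LinearMap.mkContinuous_norm_le _ (by positivity) _

end Schur

lemma memℓp_apply_single {α β : Type*} [DecidableEq α] (Z : ℓ²(α) →L[ℂ] ℓ²(β)) (b : β) :
    Memℓp (fun a => Z (lp.single 2 a 1) b) 2 := by
  classical
  have h (a : α) : Z (lp.single 2 a 1) b =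
      (starRingEnd ℂ) (ContinuousLinearMap.adjoint Z (lp.single 2 b 1) a) := by
    have := ContinuousLinearMap.adjoint_inner_left Z (lp.single 2 a 1) (lp.single 2 b 1)
    simp only [lp.inner_single_right, lp.inner_single_left] at this
    simpa using this.symm
  have hm := lp.memℓp (ContinuousLinearMap.adjoint Z (lp.single 2 b 1))
  rw [memℓp_gen_iff (by norm_num)] at hm ⊢
  simpa [h] using hm

namespace BoundedOrientation

section Out

open Finset

variable {G ι : Type*} [Group G] {s : ι → G} {C : ℕ} (o : BoundedOrientation s C)

lemma finite_setOf_fst_slot_eq (v : G) : {e | (o.slot e).1 = v}.Finite :=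
  Set.Finite.of_finite_image (Set.toFinite ((fun e => (o.slot e).2) '' _))
    fun _ he _ he' h => o.injective (Prod.ext (Eq.trans he he'.symm) h)

/-- The edges assigned to the vertex `v`. -/
noncomputable def edgesAt (v : G) : Finset (G × ι) := (o.finite_setOf_fst_slot_eq v).toFinset

lemma mem_edgesAt {v : G} {e : G × ι} : e ∈ o.edgesAt v ↔ (o.slot e).1 = v := by simp [edgesAt]

lemma card_edgesAt_le (v : G) : #(o.edgesAt v) ≤ C := by
  refine (card_le_card_of_injOn (t := univ) (fun e => (o.slot e).2) (fun _ _ => mem_univ _)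
    fun e he e' he' h => o.injective (Prod.ext ?_ h)).trans (card_fin C).le
  exact (o.mem_edgesAt.1 he).trans (o.mem_edgesAt.1 he').symm

variable [DecidableEq G]

/-- The endpoints of the edges starting at `x` which are assigned to `x`. -/
noncomputable def out (x : G) : Finset G :=
  ((o.edgesAt x).filter fun e => e.1 = x).image fun e => e.1 * s e.2

lemma mem_out {x y : G} : y ∈ o.out x ↔ ∃ i, (o.slot (x, i)).1 = x ∧ x * s i = y := by
  simp [out, mem_edgesAt]

lemma card_out_le (x : G) : #(o.out x) ≤ C :=
  card_image_le.trans ((card_filter_le _ _).trans (o.card_edgesAt_le x))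

lemma fst_slot_of_mul_notMem_out {x : G} {i : ι} (h : x * s i ∉ o.out x) :
    (o.slot (x, i)).1 = x * s i :=
  (o.fst_slot x i).resolve_left fun hx => h (o.mem_out.2 ⟨i, hx, rfl⟩)

lemma card_filter_mem_out_notMem_out_le (a b y : G) (F : Finset G) :
    #{x ∈ F | a * y ∈ o.out (a * x) ∧ b * y ∉ o.out (b * x)} ≤ C := by
  have hsub : {x ∈ F | a * y ∈ o.out (a * x) ∧ b * y ∉ o.out (b * x)} ⊆
      (o.edgesAt (b * y)).image fun e => b⁻¹ * e.1 := by
    intro x hx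
    obtain ⟨-, hxa, hxb⟩ := mem_filter.1 hx
    obtain ⟨i, -, hi⟩ := o.mem_out.1 hxa
    obtain rfl : x * s i = y := mul_left_cancel ((mul_assoc _ _ _).symm.trans hi)
    rw [← mul_assoc] at hxb ⊢
    exact mem_image.2 ⟨(b * x, i), o.mem_edgesAt.2 (o.fst_slot_of_mul_notMem_out hxb),
      inv_mul_cancel_left b x⟩
  exact (card_le_card hsub).trans (card_image_le.trans (o.card_edgesAt_le _))

/-- The left translate by `a⁻¹` of the relation `y ∈ o.out x`. -/
noncomputable def translateOut (a x : G) : Finset G := (o.out (a * x)).image (a⁻¹ * ·)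

lemma mem_translateOut {a x y : G} : y ∈ o.translateOut a x ↔ a * y ∈ o.out (a * x) := by
  simp [translateOut]

/-- The operator whose matrix is the indicator function of the part of the translate by `a⁻¹` of
the relation `y ∈ o.out x` which does not belong to its translate by `b⁻¹`. -/
noncomputable def outDiffCLM (a b : G) : ℓ²(G) →L[ℂ] ℓ²(G) :=
  schurCLM (fun x => o.translateOut a x \ o.translateOut b x) C
    (fun x => (card_le_card sdiff_subset).trans (card_image_le.trans (o.card_out_le _)))
    fun y F => by
      simpa only [mem_sdiff, mem_translateOut] using o.card_filter_mem_out_notMem_out_le a b y F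

/-- The commutator of the indicator matrix of the relation `y ∈ o.out x`, which does not define a
bounded operator in general, with the regular representation. -/
noncomputable def derivation (g : G) : ℓ²(G) →L[ℂ] ℓ²(G) :=
  (o.outDiffCLM 1 g⁻¹ - o.outDiffCLM g⁻¹ 1) * regularRep G g

lemma derivation_apply (g : G) (u : ℓ²(G)) (x : G) :
    o.derivation g u x = ∑ y ∈ o.out x, u (g⁻¹ * y) - ∑ y ∈ o.out (g⁻¹ * x), u y := by
  change ∑ y ∈ o.translateOut 1 x \ o.translateOut g⁻¹ x, u (g⁻¹ * y) -
    ∑ y ∈ o.translateOut g⁻¹ x \ o.translateOut 1 x, u (g⁻¹ * y) = _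
  rw [sum_sdiff_sub_sum_sdiff, translateOut, translateOut, sum_image (by simp),
    sum_image (by simp)]
  simp

lemma norm_derivation_le (g : G) : ‖o.derivation g‖ ≤ C + C :=
  calc ‖o.derivation g‖ ≤ ‖o.outDiffCLM 1 g⁻¹ - o.outDiffCLM g⁻¹ 1‖ * ‖regularRep G g‖ :=
        norm_mul_le _ _
    _ ≤ (C + C) * 1 := by
      gcongr
      exacts [norm_sub_le_of_le (norm_schurCLM_le _ _) (norm_schurCLM_le _ _),
        norm_regularRep_le g]
    _ = C + C := mul_one _

lemma derivation_mul (g h : G) :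
    o.derivation (g * h) = o.derivation g * regularRep G h + regularRep G g * o.derivation h := by
  ext u x
  change o.derivation (g * h) u x =
    o.derivation g (regularRep G h u) x + o.derivation h u (g⁻¹ * x)
  simp only [derivation_apply, regularRep_apply, mul_inv_rev, mul_assoc]
  ring

end Out

section NotUnitarizable

variable {G : Type*} [Group G] [DecidableEq G] {ι : Type*} {s : ι → G} {C : ℕ}
  (o : BoundedOrientation s C)

/- If the derivation is inner, then the sum of the matrix of `out` and that of `Z` commutes with the
regular representation; its row at `1` being square summable, so is its column at `1`. -/
lemma finite_setOf_one_mem_out {Z : ℓ²(G) →L[ℂ] ℓ²(G)}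
    (hZ : ∀ g, o.derivation g = regularRep G g * Z - Z * regularRep G g) :
    {x | 1 ∈ o.out x}.Finite := by
  let m (x y : G) : ℂ := if y ∈ o.out x then 1 else 0
  let δ (y : G) : ℓ²(G) := lp.single 2 y 1
  have hinv (x : G) : m x 1 = m 1 x⁻¹ + Z (δ x⁻¹) 1 - Z (δ 1) x := by
    have hδ : regularRep G x⁻¹ (δ 1) = δ x⁻¹ := by
      simp only [δ, regularRep_single, mul_one]
    have h : o.derivation x⁻¹ (δ 1) 1 = Z (δ 1) x - Z (δ x⁻¹) 1 := by
      rw [hZ]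
      change regularRep G x⁻¹ (Z (δ 1)) 1 - Z (regularRep G x⁻¹ (δ 1)) 1 = _
      rw [hδ, regularRep_apply, inv_inv, mul_one]
    rw [derivation_apply, inv_inv, mul_one] at h
    simp only [δ, lp.single_apply, Pi.single_apply, Finset.sum_ite_eq', mul_eq_one_iff_eq_inv',
      m] at h ⊢
    linear_combination -h
  have hrow : Memℓp (fun y => m 1 y + Z (δ y) 1) 2 :=
    ((memℓp_zero ((o.out 1).finite_toSet.subset fun y hy => by
      by_contra hn
      exact hy (if_neg hn))).of_exponent_ge zero_le).add (memℓp_apply_single Z 1)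
  have hcol : Memℓp (fun x => m x 1) 2 := by
    have hrow' : Memℓp (fun x => m 1 x⁻¹ + Z (δ x⁻¹) 1) 2 := by
      rw [memℓp_gen_iff (by norm_num)] at hrow ⊢
      exact (Equiv.inv G).summable_iff.2 hrow
    simp only [hinv]
    exact hrow'.sub (lp.memℓp (Z (δ 1)))
  rw [memℓp_gen_iff (by norm_num)] at hcol
  refine (Filter.eventually_cofinite.1
    (hcol.tendsto_cofinite_zero.eventually (gt_mem_nhds zero_lt_one))).subset fun x hx => ?_
  have hm : m x 1 = 1 := if_pos hx
  simp [hm]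

lemma infinite_setOf_one_mem_out [Infinite ι] : {x | 1 ∈ o.out x}.Infinite := by
  intro hfin
  have hnot : {i | 1 ∉ o.out (s i)⁻¹}.Finite := by
    refine Set.Finite.of_finite_image (f := fun i => ((s i)⁻¹, i))
      ((o.finite_setOf_fst_slot_eq 1).subset ?_) fun i _ j _ h => (Prod.ext_iff.1 h).2
    rintro _ ⟨i, hi, rfl⟩
    rw [← inv_mul_cancel (s i)] at hi ⊢
    exact o.fst_slot_of_mul_notMem_out hi
  have hrange : (Set.range s).Finite := by
    refine ((hfin.image (·⁻¹)).union (hnot.image s)).subset ?_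
    rintro _ ⟨i, rfl⟩
    by_cases hi : 1 ∈ o.out (s i)⁻¹
    · exact Or.inl ⟨(s i)⁻¹, hi, inv_inv _⟩
    · exact Or.inr ⟨i, hi, rfl⟩
  have hinj : Function.Injective fun i => o.slot (1, i) :=
    fun i j h => (Prod.ext_iff.1 (o.injective h)).2
  refine Set.infinite_range_of_injective hinj
    (((hrange.insert 1).prod Set.finite_univ).subset ?_)
  rintro _ ⟨i, rfl⟩
  refine ⟨(o.fst_slot 1 i).imp id fun h => ⟨i, ?_⟩, Set.mem_univ _⟩
  rw [h, one_mul]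

end NotUnitarizable

theorem not_unitarizable {G : Type} [Group G] {ι : Type*} [Infinite ι] {s : ι → G} {C : ℕ}
    (o : BoundedOrientation s C) : ¬ Unitarizable G := by
  classical
  intro hG
  obtain ⟨Z, hZ⟩ := hG.exists_eq_commutator ⟨1, norm_regularRep_le⟩ o.derivation_mul
    ⟨C + C, o.norm_derivation_le⟩
  exact o.infinite_setOf_one_mem_out (o.finite_setOf_one_mem_out hZ)

open scoped Classical in
/-- The pull-back of a bounded orientation along a map `Θ` of groups taking edges to edges. -/
noncomputable def comap {G G' ι : Type*} [Group G] [Group G'] {s : ι → G} {C : ℕ}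
    (o : BoundedOrientation s C) {t : ι → G'} (Θ : G' → G)
    (hΘ : ∀ g i, Θ (g * t i) = Θ g * s i) : BoundedOrientation t C where
  slot e := (if (o.slot (Θ e.1, e.2)).1 = Θ e.1 then e.1 else e.1 * t e.2,
    (o.slot (Θ e.1, e.2)).2)
  injective := by
    have hΘslot (g : G') (i : ι) : Θ (if (o.slot (Θ g, i)).1 = Θ g then g else g * t i) =
        (o.slot (Θ g, i)).1 := by
      split_ifs with h
      · exact h.symm
      · exact (hΘ g i).trans ((o.fst_slot _ i).resolve_left h).symm
    rintro ⟨g, i⟩ ⟨g', i'⟩ h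
    obtain ⟨hvertex, hslot⟩ := Prod.mk.inj h
    have hfst := congrArg Θ hvertex
    dsimp only at hfst hvertex hslot
    rw [hΘslot, hΘslot] at hfst
    obtain ⟨hg, rfl⟩ := Prod.mk.inj (o.injective (Prod.ext hfst hslot))
    rw [← hg] at hvertex
    split_ifs at hvertex
    exacts [Prod.ext hvertex rfl, Prod.ext (mul_right_cancel hvertex) rfl]
  fst_slot x i := by
    dsimp only
    split_ifs
    exacts [Or.inl rfl, Or.inr rfl]

end BoundedOrientation

/-! ### Linear algebra and counting -/

section LinearAlgebra

variable {k : Type*} [Field k]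

lemma exists_determining_coordinates {ι : Type*} (R : Submodule k (ι → k))
    [FiniteDimensional k R] :
    ∃ B : Finset ι, B.card ≤ Module.finrank k R ∧
      ∀ m ∈ R, (∀ b ∈ B, m b = 0) → m = 0 := by
  classical
  let ev : ι → Module.Dual k R := fun b => (LinearMap.proj b).comp R.subtype
  obtain ⟨κ, a, -, hspan, hli⟩ := exists_linearIndependent' k ev
  have := hli.finite
  have := Fintype.ofFinite κ
  refine ⟨Finset.univ.image a, ?_, fun m hm h0 => funext fun b => ?_⟩
  · calc (Finset.univ.image a).card ≤ Fintype.card κ := Finset.card_image_le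
      _ ≤ Module.finrank k (Module.Dual k R) := hli.fintype_card_le_finrank
      _ = Module.finrank k R := Subspace.dual_finrank_eq
  · have hle : Submodule.span k (Set.range (ev ∘ a)) ≤
        LinearMap.ker (Module.Dual.eval k R ⟨m, hm⟩) := by
      rw [Submodule.span_le]
      rintro _ ⟨j, rfl⟩
      exact h0 (a j) (Finset.mem_image_of_mem a (Finset.mem_univ j))
    exact hle (hspan.symm.le (Submodule.subset_span ⟨b, rfl⟩))

lemma finrank_le_of_disjoint_of_le_sup {M : Type*} [AddCommGroup M] [Module k M]
    {U R T : Submodule k M} [FiniteDimensional k U] [FiniteDimensional k R]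
    [FiniteDimensional k T] (hUR : Disjoint U R) (hU : U ≤ R ⊔ T) :
    Module.finrank k U ≤ Module.finrank k T := by
  have hsup := Submodule.finrank_sup_add_finrank_inf_eq U R
  rw [hUR.eq_bot, finrank_bot, add_zero] at hsup
  have hle : Module.finrank k ↥(U ⊔ R) ≤ Module.finrank k ↥(R ⊔ T) :=
    Submodule.finrank_mono (sup_le hU le_sup_left)
  have hadd := Submodule.finrank_add_le_finrank_add_finrank R T
  omega

end LinearAlgebra

section Counting

variable {Q : Type*} [Group Q] [Fintype Q]

-- Average over `g`: each pair in `B` catches each vertex for exactly one translation.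
lemma exists_translate_card_filter_le [DecidableEq Q] {H α : Type*} [DecidableEq α]
    (B : Finset (Q × α)) (hB : B.card ≤ Fintype.card Q) (p : H → Q) {A : Finset (H × α)}
    {V : Finset H} (hV : ∀ a ∈ A, a.1 ∈ V) :
    ∃ g : Q, (A.filter fun a => (g * p a.1, a.2) ∈ B).card ≤ V.card := by
  have hinj : ((Finset.univ : Finset Q).sigma fun g =>
      A.filter fun a => (g * p a.1, a.2) ∈ B).card ≤ (B ×ˢ V).card := by
    refine Finset.card_le_card_of_injOn (fun x => ((x.1 * p x.2.1, x.2.2), x.2.1)) ?_ ?_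
    · intro x hx
      obtain ⟨hxA, hxB⟩ := Finset.mem_filter.1 (Finset.mem_sigma.1 hx).2
      exact Finset.mem_product.2 ⟨hxB, hV _ hxA⟩
    · rintro ⟨g, h, n⟩ - ⟨g', h', n'⟩ - heq
      simp only [Prod.mk.injEq] at heq
      obtain ⟨⟨hg, rfl⟩, rfl⟩ := heq
      rw [mul_right_cancel hg]
  rw [Finset.card_sigma, Finset.card_product] at hinj
  obtain ⟨g, -, hg⟩ := Finset.exists_le_of_sum_le (g := fun _ => V.card) Finset.univ_nonempty <|
    hinj.trans ((Nat.mul_le_mul_right _ hB).trans_eq (by simp))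
  exact ⟨g, hg⟩

lemma card_image_mul_orderOf_le {X : Type*} [DecidableEq X] {f : Q → X} {g : Q}
    (hf : ∀ q, f (q * g) = f q) :
    (Finset.univ.image f).card * orderOf g ≤ Fintype.card Q := by
  have hpow : ∀ q (n : ℕ), f (q * g ^ n) = f q := by
    intro q n
    induction n with
    | zero => simp
    | succ n ih => rw [pow_succ, ← mul_assoc, hf, ih]
  rw [mul_comm, ← Finset.card_univ]
  refine Finset.mul_card_image_le_card _ _ fun x hx => ?_
  obtain ⟨q, -, rfl⟩ := Finset.mem_image.1 hx
  rw [← Finset.card_range (orderOf g)]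
  refine Finset.card_le_card_of_injOn (fun n => q * g ^ n) (fun n _ => by simp [hpow]) ?_
  intro m hm n hn hmn
  exact pow_injOn_Iio_orderOf (by simpa using hm) (by simpa using hn) (mul_left_cancel hmn)

end Counting

/-! ### Fox calculus -/

/-- `k`-valued 1-chains on the Cayley graph of `Q` whose edges carry labels in `L`; the pair
`(q, a)` stands for the edge leaving `q` with label `a`. -/
abbrev Chain (k Q : Type*) {α : Type*} (L : Finset α) : Type _ := Q × L → k

namespace Chain

section Translation

variable {k Q α : Type*} [Field k] {L : Finset α}

variable (k L) in
/-- The single edge `(q, a)` as a chain. It is zero for labels outside `L`, so that it makes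
sense for all generators of the free group. -/
noncomputable def edge (q : Q) (a : α) : Chain k Q L :=
  {e : Q × L | e.1 = q ∧ (e.2 : α) = a}.indicator 1

lemma edge_apply_of_ne {q : Q} {a : α} {e : Q × L} (h : (e.1, (e.2 : α)) ≠ (q, a)) :
    edge k L q a e = 0 :=
  Set.indicator_of_notMem (fun he => h (Prod.ext he.1 he.2)) _

lemma linearIndependent_edge {ι : Type*} {x : ι → Q × α} (hx : Function.Injective x)
    (hL : ∀ i, (x i).2 ∈ L) : LinearIndependent k fun i => edge k L (x i).1 (x i).2 := by
  classical
  let y : ι → Q × L := fun i => ((x i).1, ⟨(x i).2, hL i⟩)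
  have hy : Function.Injective y := fun i j hij =>
    hx (Prod.ext (congrArg (fun e => e.1) hij) (congrArg (fun e => (e.2 : α)) hij))
  convert (Pi.linearIndependent_single_one (Q × L) k).comp y hy using 2 with i
  funext e
  simp only [edge, y, Set.indicator_apply, Function.comp_apply, Pi.single_apply, Prod.ext_iff,
    Subtype.ext_iff]
  rfl

variable [Group Q]

/-- The translation action of `Q` on chains. -/
def shift : Representation k Q (Chain k Q L) where
  toFun q := LinearMap.funLeft k k fun e => (q⁻¹ * e.1, e.2)
  map_one' := by ext; simp [LinearMap.funLeft]
  map_mul' q r := by ext; simp [LinearMap.funLeft, mul_assoc]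

lemma shift_apply (q : Q) (m : Chain k Q L) (e : Q × L) :
    shift q m e = m (q⁻¹ * e.1, e.2) := rfl

lemma shift_one (m : Chain k Q L) : shift 1 m = m := by
  rw [map_one, Module.End.one_apply]

lemma shift_shift (q r : Q) (m : Chain k Q L) : shift q (shift r m) = shift (q * r) m := by
  rw [map_mul, Module.End.mul_apply]

lemma shift_eq_zero_iff {q : Q} {m : Chain k Q L} : shift q m = 0 ↔ m = 0 := by
  refine ⟨fun h => ?_, fun h => by rw [h, map_zero]⟩
  rw [← shift_one m, ← inv_mul_cancel q, ← shift_shift, h, map_zero]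

lemma shift_edge (q r : Q) (a : α) : shift q (edge k L r a) = edge k L (q * r) a := by
  classical
  funext e
  simp only [shift_apply, edge, Set.indicator_apply, Set.mem_ofPred_eq, inv_mul_eq_iff_eq_mul]
  rfl

-- Translated by `g`, the edges avoid the coordinates `B` that determine the elements of `R`.
lemma disjoint_span_edge {R : Submodule k (Chain k Q L)} (hR : ∀ q, R ≤ R.comap (shift q))
    {B : Finset (Q × L)} (hB : ∀ m ∈ R, (∀ b ∈ B, m b = 0) → m = 0) {g : Q} {ι : Type*}
    {x : ι → Q × α} (hx : ∀ i, ∀ b ∈ B, (b.1, (b.2 : α)) ≠ (g * (x i).1, (x i).2)) :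
    Disjoint (Submodule.span k (Set.range fun i => edge k L (x i).1 (x i).2)) R := by
  rw [Submodule.disjoint_def]
  intro m hm hmR
  refine (shift_eq_zero_iff (q := g)).1 (hB _ (hR g hmR) fun b hb => ?_)
  have hle : Submodule.span k (Set.range fun i => edge k L (x i).1 (x i).2) ≤
      LinearMap.ker ((LinearMap.proj b).comp (shift (k := k) (L := L) g)) := by
    rw [Submodule.span_le]
    rintro _ ⟨i, rfl⟩
    change shift g (edge k L (x i).1 (x i).2) b = 0
    rw [shift_edge]
    exact edge_apply_of_ne (hx i b hb)
  exact hle hm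

/-- Some translation moves all but at most `#V` of the edges away from a set of coordinates that
determines `R`. The remaining edges are independent modulo `R`, where each of them is a difference
of two of the chains `τ`. -/
lemma card_le_two_mul_card_endpoints [Finite Q] {H : Type*} {R : Submodule k (Chain k Q L)}
    (hR : ∀ q, R ≤ R.comap (shift q)) (hdim : Module.finrank k R ≤ Nat.card Q)
    {A : Finset (H × α)} {V : Finset H} {t : H × α → H} {p : H → Q} {τ : H → Chain k Q L}
    (hV : ∀ a ∈ A, a.1 ∈ V ∧ t a ∈ V) (hp : Set.InjOn p V) (hL : ∀ a ∈ A, a.2 ∈ L)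
    (hτ : ∀ a ∈ A, τ a.1 + edge k L (p a.1) a.2 - τ (t a) ∈ R) :
    A.card ≤ 2 * V.card := by
  classical
  have := Fintype.ofFinite Q
  obtain ⟨B, hB, hdet⟩ := exists_determining_coordinates R
  let B' : Finset (Q × α) := B.image fun b => (b.1, (b.2 : α))
  obtain ⟨g, hg⟩ := exists_translate_card_filter_le B'
    (Finset.card_image_le.trans (hB.trans (hdim.trans_eq Nat.card_eq_fintype_card))) p
    fun a ha => (hV a ha).1
  let S : Finset (H × α) := A.filter fun a => (g * p a.1, a.2) ∉ B'
  have hSA : ∀ a ∈ S, a ∈ A := fun a ha => (Finset.mem_filter.1 ha).1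
  let f : S → Chain k Q L := fun a => edge k L (p a.1.1) a.1.2
  have hli : LinearIndependent k f := by
    refine linearIndependent_edge (x := fun a : S => (p a.1.1, a.1.2)) ?_
      fun a => hL a (hSA a a.2)
    rintro ⟨a, ha⟩ ⟨b, hb⟩ hab
    obtain ⟨h1, h2⟩ := Prod.ext_iff.1 hab
    exact Subtype.ext (Prod.ext (hp (hV a (hSA a ha)).1 (hV b (hSA b hb)).1 h1) h2)
  have hdisj : Disjoint (Submodule.span k (Set.range f)) R :=
    disjoint_span_edge (x := fun a : S => (p a.1.1, a.1.2)) hR hdet fun a b hb heq =>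
      (Finset.mem_filter.1 a.2).2 (heq ▸ Finset.mem_image_of_mem _ hb)
  have hsup : Submodule.span k (Set.range f) ≤ R ⊔ Submodule.span k (V.image τ : Finset _) := by
    rw [Submodule.span_le]
    rintro _ ⟨a, rfl⟩
    have hmem : ∀ v ∈ V, τ v ∈ Submodule.span k ((V.image τ : Finset _) : Set (Chain k Q L)) :=
      fun v hv => Submodule.subset_span (Finset.mem_image_of_mem τ hv)
    obtain ⟨h1, h2⟩ := hV a (hSA a a.2)
    refine Submodule.mem_sup.2 ⟨_, hτ a (hSA a a.2), _, sub_mem (hmem _ h2) (hmem _ h1), ?_⟩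
    simp only [f]
    abel
  have hS : S.card ≤ V.card := calc
    S.card = Module.finrank k (Submodule.span k (Set.range f)) := by
      rw [finrank_span_eq_card hli, Fintype.card_coe]
    _ ≤ (V.image τ).card :=
      (finrank_le_of_disjoint_of_le_sup hdisj hsup).trans (finrank_span_finset_le_card _)
    _ ≤ V.card := Finset.card_image_le
  have hsplit : (A.filter fun a => (g * p a.1, a.2) ∈ B').card + S.card = A.card :=
    Finset.card_filter_add_card_filter_not _
  omega

end Translation

section Fox

open RegularWreathProduct

variable (k : Type*) {Q α : Type*} [Field k] [Group Q] (L : Finset α) (φ : FreeGroup α →* Q)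

/-- The Magnus homomorphism: the right component is `φ`, and the left component records
how often each edge is traversed by the path in the Cayley graph spelled by a word. -/
noncomputable def magnus : FreeGroup α →* (Multiplicative (L → k) ≀ᵣ Q) :=
  FreeGroup.lift fun a =>
    ⟨fun q => Multiplicative.ofAdd fun l => edge k L 1 a (q, l), φ (FreeGroup.of a)⟩

lemma magnus_right (v : FreeGroup α) : (magnus k L φ v).right = φ v :=
  DFunLike.congr_fun (FreeGroup.ext_hom (rightHom.comp (magnus k L φ)) φ fun a => by
    simp [magnus]) v

/-- The Fox derivative of a word: the chain of the path from `1` that it spells. -/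
noncomputable def fox (v : FreeGroup α) : Chain k Q L :=
  fun e => Multiplicative.toAdd ((magnus k L φ v).left e.1) e.2

lemma fox_of (a : α) : fox k L φ (FreeGroup.of a) = edge k L 1 a := by
  funext e
  simp [fox, magnus]

lemma fox_one : fox k L φ 1 = 0 := by
  funext e
  simp [fox]

lemma fox_mul (v w : FreeGroup α) :
    fox k L φ (v * w) = fox k L φ v + shift (φ v) (fox k L φ w) := by
  funext e
  simp [fox, shift_apply, magnus_right]

variable {φ}

lemma fox_mul_inv_of_eq {v w : FreeGroup α} (h : φ v = φ w) :
    fox k L φ (v * w⁻¹) = fox k L φ v - fox k L φ w := by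
  have hw := fox_mul k L φ (v * w⁻¹) w
  rw [inv_mul_cancel_right, map_mul, map_inv, h, mul_inv_cancel, shift_one] at hw
  exact eq_sub_of_add_eq hw.symm

lemma shift_fox_pow {v : FreeGroup α} {n : ℕ} (h : φ v ^ n = 1) :
    shift (φ v) (fox k L φ (v ^ n)) = fox k L φ (v ^ n) := by
  have h1 := fox_mul k L φ v (v ^ n)
  rw [← pow_succ', pow_succ, fox_mul, map_pow, h, shift_one, add_comm] at h1
  exact (add_left_cancel h1).symm

lemma fox_pow_of_map_eq_one {v : FreeGroup α} (h : φ v = 1) (n : ℕ) :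
    fox k L φ (v ^ n) = n • fox k L φ v := by
  induction n with
  | zero => rw [pow_zero, fox_one, zero_nsmul]
  | succ n ih => rw [pow_succ', fox_mul, h, shift_one, ih, succ_nsmul']

variable {ι : Type*} (φ) (r : ι → FreeGroup α)

/-- The translation-invariant space of chains spanned by the relators `r`. -/
def relSpan : Submodule k (Chain k Q L) :=
  Submodule.span k (Set.range fun x : Q × ι => shift x.1 (fox k L φ (r x.2)))

lemma relSpan_le_comap_shift (q : Q) : relSpan k L φ r ≤ (relSpan k L φ r).comap (shift q) := by
  refine Submodule.span_le.2 ?_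
  rintro _ ⟨⟨q', j⟩, rfl⟩
  exact Submodule.subset_span ⟨(q * q', j), (shift_shift _ _ _).symm⟩

lemma fox_mem_relSpan (j : ι) : fox k L φ (r j) ∈ relSpan k L φ r :=
  Submodule.subset_span ⟨(1, j), shift_one _⟩

variable {φ} {p : ℕ} [Fact p.Prime] [CharP k p]

/-- The orbit of a relator `v ^ p ^ (n + 1)` is nonzero only if `φ v` has order exactly
`p ^ (n + 1)`, and this relator is fixed by `φ v`. -/
lemma card_orbit_fox_pow_le [Fintype Q] [DecidableEq (Chain k Q L)] {v : FreeGroup α} {n : ℕ}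
    (hv : φ v ^ p ^ (n + 1) = 1) :
    ((Finset.univ.image fun q => shift q (fox k L φ (v ^ p ^ (n + 1)))).erase 0).card ≤
      Fintype.card Q / p ^ (n + 1) := by
  have hp : 0 < p := (Fact.out : p.Prime).pos
  by_cases h : φ v ^ p ^ n = 1
  · have h0 : fox k L φ (v ^ p ^ (n + 1)) = 0 := by
      rw [pow_succ, pow_mul, fox_pow_of_map_eq_one k L (by rw [map_pow, h]),
        ← Nat.cast_smul_eq_nsmul k, CharP.cast_eq_zero, zero_smul]
    simp [h0, Finset.image_const]
  · rw [Nat.le_div_iff_mul_le (by positivity), ← orderOf_eq_prime_pow h hv]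
    refine (Nat.mul_le_mul_right _ (Finset.card_erase_le)).trans
      (card_image_mul_orderOf_le fun q => ?_)
    rw [orderOf_eq_prime_pow h hv, ← shift_shift, shift_fox_pow k L hv]

lemma finrank_relSpan_le [Finite Q] {w : ℕ → FreeGroup α}
    (hw : ∀ n, φ (w n) ^ p ^ (n + 1) = 1) :
    Module.finrank k (relSpan k L φ fun n => w n ^ p ^ (n + 1)) ≤ Nat.card Q := by
  classical
  have := Fintype.ofFinite Q
  have hp : 2 ≤ p := (Fact.out : p.Prime).two_le
  let X : ℕ → Finset (Chain k Q L) := fun n =>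
    (Finset.univ.image fun q => shift q (fox k L φ (w n ^ p ^ (n + 1)))).erase 0
  let T := (Finset.range (Fintype.card Q)).biUnion X
  have hX : ∀ n, (X n).card ≤ Fintype.card Q / p ^ (n + 1) := fun n =>
    card_orbit_fox_pow_le k L (hw n)
  have hspan : relSpan k L φ (fun n => w n ^ p ^ (n + 1)) ≤ Submodule.span k T := by
    refine Submodule.span_le.2 ?_
    rintro _ ⟨⟨q, n⟩, rfl⟩
    by_cases h0 : shift q (fox k L φ (w n ^ p ^ (n + 1))) = 0
    · exact (congrArg (· ∈ Submodule.span k (T : Set (Chain k Q L))) h0).mpr (zero_mem _)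
    have hmem : shift q (fox k L φ (w n ^ p ^ (n + 1))) ∈ X n :=
      Finset.mem_erase.2 ⟨h0, Finset.mem_image_of_mem _ (Finset.mem_univ q)⟩
    refine Submodule.subset_span (Finset.mem_biUnion.2 ⟨n, Finset.mem_range.2 ?_, hmem⟩)
    by_contra! hle
    refine (Finset.card_pos.2 ⟨_, hmem⟩).ne' (Nat.le_zero.1 ((hX n).trans_eq ?_))
    exact Nat.div_eq_of_lt (hle.trans_lt ((Nat.lt_succ_self n).trans (Nat.lt_pow_self hp)))
  calc Module.finrank k (relSpan k L φ fun n => w n ^ p ^ (n + 1))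
      ≤ T.card := (Submodule.finrank_mono hspan).trans (finrank_span_finset_le_card T)
    _ ≤ ∑ n ∈ Finset.range (Fintype.card Q), Fintype.card Q / p ^ (n + 1) :=
        Finset.card_biUnion_le.trans (Finset.sum_le_sum fun n _ => hX n)
    _ = ∑ n ∈ Finset.Ico 1 (Fintype.card Q + 1), Fintype.card Q / p ^ n := by
        rw [Finset.sum_Ico_eq_sum_range]; simp [add_comm]
    _ ≤ Fintype.card Q / (p - 1) := Nat.geom_sum_Ico_le hp _ _
    _ ≤ Fintype.card Q := Nat.div_le_self _ _
    _ = Nat.card Q := Nat.card_eq_fintype_card.symm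

end Fox

end Chain

/-! ### A torsion group with a bounded orientation -/

section Tower

variable (k : Type*) [Field k] {ι : Type*} (r : ι → FreeGroup ℕ)

section Descend

variable (L : Finset ℕ) (N : Subgroup (FreeGroup ℕ)) [N.Normal]

/-- The elements of `N` whose chain on the Cayley graph of the quotient by `N` lies in the span
of the relators. -/
def descend : Subgroup (FreeGroup ℕ) where
  carrier := {v | v ∈ N ∧
    Chain.fox k L (QuotientGroup.mk' N) v ∈ Chain.relSpan k L (QuotientGroup.mk' N) r}
  one_mem' := ⟨N.one_mem, by rw [Chain.fox_one]; exact zero_mem _⟩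
  mul_mem' := fun {v w} hv hw => ⟨N.mul_mem hv.1 hw.1, by
    rw [Chain.fox_mul]
    exact add_mem hv.2 (Chain.relSpan_le_comap_shift _ _ _ _ _ hw.2)⟩
  inv_mem' := fun {v} hv => ⟨N.inv_mem hv.1, by
    have h1 : QuotientGroup.mk' N 1 = QuotientGroup.mk' N v :=
      (map_one _).trans ((QuotientGroup.eq_one_iff v).2 hv.1).symm
    rw [← one_mul v⁻¹, Chain.fox_mul_inv_of_eq k L h1, Chain.fox_one, zero_sub]
    exact neg_mem hv.2⟩

lemma descend_le : descend k r L N ≤ N := fun _ h => h.1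

lemma mem_descend {j : ι} (hj : r j ∈ N) : r j ∈ descend k r L N :=
  ⟨hj, Chain.fox_mem_relSpan k L _ r j⟩

instance normal_descend : (descend k r L N).Normal := by
  refine ⟨fun v hv g => ⟨‹N.Normal›.conj_mem v hv.1 g, ?_⟩⟩
  have h1 : QuotientGroup.mk' N (g * v) = QuotientGroup.mk' N g :=
    QuotientGroup.eq.2 (by simpa using hv.1)
  rw [Chain.fox_mul_inv_of_eq k L h1, Chain.fox_mul, add_sub_cancel_left]
  exact Chain.relSpan_le_comap_shift _ _ _ _ _ hv.2

lemma finiteIndex_descend [Finite k] [N.FiniteIndex] : (descend k r L N).FiniteIndex := by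
  have : Finite (FreeGroup ℕ ⧸ N) := inferInstance
  have hle : (Chain.magnus k L (QuotientGroup.mk' N)).ker ≤ descend k r L N := by
    intro v hv
    rw [MonoidHom.mem_ker] at hv
    refine ⟨(QuotientGroup.eq_one_iff v).1 ?_, ?_⟩
    · have := Chain.magnus_right k L (QuotientGroup.mk' N) v
      rw [hv] at this
      exact this.symm
    · have : Chain.fox k L (QuotientGroup.mk' N) v = 0 := by
        funext e
        simp [Chain.fox, hv]
      rw [this]
      exact zero_mem _
  exact Subgroup.finiteIndex_of_le hle

end Descend

/-- The descending tower of normal subgroups; only the labels below `i` are taken into account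
in step `i`, which keeps the index finite. -/
def tower : ℕ → {N : Subgroup (FreeGroup ℕ) // N.Normal}
  | 0 => ⟨⊤, inferInstance⟩
  | i + 1 => haveI := (tower i).2; ⟨descend k r (Finset.range i) (tower i).1, inferInstance⟩

variable (i : ℕ)

instance normal_tower : (tower k r i).1.Normal := (tower k r i).2

lemma tower_antitone : Antitone fun i => (tower k r i).1 :=
  antitone_nat_of_succ_le fun i => descend_le k r (Finset.range i) (tower k r i).1

instance finiteIndex_tower [Finite k] : (tower k r i).1.FiniteIndex := by
  induction i with
  | zero => exact inferInstanceAs (⊤ : Subgroup (FreeGroup ℕ)).FiniteIndex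
  | succ i _ => exact finiteIndex_descend k r (Finset.range i) (tower k r i).1

lemma mem_tower (j : ι) : r j ∈ (tower k r i).1 := by
  induction i with
  | zero => exact Subgroup.mem_top _
  | succ i ih => exact mem_descend k r (Finset.range i) (tower k r i).1 ih

/-- The quotient map to the finite group of level `i`. -/
abbrev towerMap : FreeGroup ℕ →* FreeGroup ℕ ⧸ (tower k r i).1 := QuotientGroup.mk' _

/-- The limit group of the tower, the quotient by the intersection of its steps. -/
abbrev TowerQuotient : Type := FreeGroup ℕ ⧸ ⨅ i, (tower k r i).1

instance normal_iInf_tower : (⨅ i, (tower k r i).1).Normal :=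
  Subgroup.normal_iInf_normal fun i => (tower k r i).2

lemma eventually_injOn_mk_out {F I : Type*} [Group F] [Preorder I] {T : I → Subgroup F}
    (hT : Antitone T) (V : Finset (F ⧸ ⨅ i, T i)) :
    ∀ᶠ i in Filter.atTop,
      Set.InjOn (fun h : F ⧸ ⨅ i, T i => QuotientGroup.mk (s := T i) h.out) V := by
  simp only [Set.InjOn, Finset.mem_coe]
  rw [Filter.eventually_all_finset]
  intro h _
  rw [Filter.eventually_all_finset]
  intro h' _
  by_cases hne : h = h'
  · exact Filter.Eventually.of_forall fun _ _ => hne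
  have : h.out⁻¹ * h'.out ∉ ⨅ i, T i := by
    rwa [← QuotientGroup.eq, QuotientGroup.out_eq', QuotientGroup.out_eq']
  rw [Subgroup.mem_iInf, not_forall] at this
  obtain ⟨i, hi⟩ := this
  filter_upwards [Filter.eventually_ge_atTop i] with j hj heq
  exact absurd (hT hj (QuotientGroup.eq.1 heq)) hi

lemma fox_add_edge_sub_fox_mem_relSpan (h : TowerQuotient k r) (n : ℕ) :
    Chain.fox k (Finset.range i) (towerMap k r i) h.out
      + Chain.edge k (Finset.range i) (towerMap k r i h.out) n
      - Chain.fox k (Finset.range i) (towerMap k r i) (h * QuotientGroup.mk (FreeGroup.of n)).out ∈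
        Chain.relSpan k (Finset.range i) (towerMap k r i) r := by
  set h' : TowerQuotient k r := h * QuotientGroup.mk (FreeGroup.of n)
  have hmem : h.out * FreeGroup.of n * h'.out⁻¹ ∈ ⨅ i, (tower k r i).1 := by
    rw [← QuotientGroup.eq_one_iff, QuotientGroup.mk_mul, QuotientGroup.mk_mul,
      QuotientGroup.mk_inv, QuotientGroup.out_eq', QuotientGroup.out_eq', mul_inv_eq_one]
  rw [Subgroup.mem_iInf] at hmem
  have hφ : towerMap k r i (h.out * FreeGroup.of n) = towerMap k r i h'.out := by
    rw [← mul_inv_eq_one, ← map_inv, ← map_mul]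
    exact (QuotientGroup.eq_one_iff _).2 (hmem i)
  have hfox : Chain.fox k (Finset.range i) (towerMap k r i) (h.out * FreeGroup.of n * h'.out⁻¹) ∈
      Chain.relSpan k (Finset.range i) (towerMap k r i) r :=
    (hmem (i + 1)).2
  rwa [Chain.fox_mul_inv_of_eq k _ hφ, Chain.fox_mul, Chain.fox_of, Chain.shift_edge,
    mul_one] at hfox

variable {p : ℕ} [Fact p.Prime] [CharP k p] [Finite k]

lemma nonempty_boundedOrientation_towerQuotient (w : ℕ → FreeGroup ℕ) :
    Nonempty (BoundedOrientation (fun n =>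
      (QuotientGroup.mk (FreeGroup.of n) : TowerQuotient k fun n => w n ^ p ^ (n + 1))) 2) := by
  classical
  refine BoundedOrientation.nonempty_of_card_le fun A => ?_
  let r : ℕ → FreeGroup ℕ := fun n => w n ^ p ^ (n + 1)
  let t : TowerQuotient k r × ℕ → TowerQuotient k r := fun a => a.1 * FreeGroup.of a.2
  let V : Finset (TowerQuotient k r) := A.image Prod.fst ∪ A.image t
  have hlab : ∀ᶠ i in Filter.atTop, ∀ a ∈ A, a.2 < i := by
    rw [Filter.eventually_all_finset]
    exact fun a _ => Filter.eventually_gt_atTop a.2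
  obtain ⟨i, hinj, hi⟩ :=
    ((eventually_injOn_mk_out (tower_antitone k r) V).and hlab).exists
  refine Chain.card_le_two_mul_card_endpoints
    (Chain.relSpan_le_comap_shift k (Finset.range i) (towerMap k r i) r)
    (Chain.finrank_relSpan_le k (Finset.range i) (p := p) fun n => ?_)
    (fun a ha => ⟨Finset.mem_union_left _ (Finset.mem_image_of_mem _ ha),
      Finset.mem_union_right _ (Finset.mem_image_of_mem t ha)⟩)
    hinj (τ := fun h => Chain.fox k (Finset.range i) (towerMap k r i) h.out)
    (fun a ha => Finset.mem_range.2 (hi a ha))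
    fun a _ => fox_add_edge_sub_fox_mem_relSpan k r i a.1 a.2
  rw [← map_pow]
  exact (QuotientGroup.eq_one_iff _).2 (mem_tower k r i n)

end Tower

theorem exists_isPGroup_boundedOrientation (p : ℕ) [Fact p.Prime] :
    ∃ (H : Type) (_ : Group H) (s : ℕ → H), IsPGroup p H ∧ Nonempty (BoundedOrientation s 2) := by
  obtain ⟨w, hw⟩ := exists_surjective_nat (FreeGroup ℕ)
  refine ⟨TowerQuotient (ZMod p) fun n => w n ^ p ^ (n + 1), inferInstance, _, fun h => ?_,
    nonempty_boundedOrientation_towerQuotient (ZMod p) w⟩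
  obtain ⟨v, rfl⟩ := QuotientGroup.mk_surjective h
  obtain ⟨n, rfl⟩ := hw v
  refine ⟨n + 1, (QuotientGroup.eq_one_iff _).2 (Subgroup.mem_iInf.2 fun i => ?_)⟩
  exact mem_tower (ZMod p) (fun n => w n ^ p ^ (n + 1)) i n

/-! ### Almost invariant vectors -/

/-- A nonzero vector of `ℓ²(G)` which is moved by less than `ε` times its norm by the elements
of `S`. -/
def IsAlmostInvariant {G : Type*} [Group G] (S : Set G) (ε : ℝ) (u : ℓ²(G)) : Prop :=
  u ≠ 0 ∧ ∀ s ∈ S, ‖leftRegular s u - u‖ < ε * ‖u‖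

section AlmostInvariant

variable {G : Type*} [Group G] {S : Set G} {ε : ℝ}

lemma IsAlmostInvariant.exists_norm_eq_one {u : ℓ²(G)} (hu : IsAlmostInvariant S ε u) :
    ∃ v : ℓ²(G), ‖v‖ = 1 ∧ ∀ s ∈ S, ‖leftRegular s v - v‖ < ε := by
  obtain ⟨hu0, hS⟩ := hu
  have hpos : 0 < ‖u‖ := norm_pos_iff.2 hu0
  have hnorm : ‖((‖u‖⁻¹ : ℝ) : ℂ)‖ = ‖u‖⁻¹ := by
    rw [Complex.norm_real, norm_inv, norm_norm]
  refine ⟨((‖u‖⁻¹ : ℝ) : ℂ) • u, ?_, fun s hs => ?_⟩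
  · rw [norm_smul, hnorm, inv_mul_cancel₀ hpos.ne']
  · have hsmul : leftRegular s (((‖u‖⁻¹ : ℝ) : ℂ) • u) - ((‖u‖⁻¹ : ℝ) : ℂ) • u =
        ((‖u‖⁻¹ : ℝ) : ℂ) • (leftRegular s u - u) := by
      rw [smul_sub]
      rfl
    rw [hsmul, norm_smul, hnorm, inv_mul_lt_iff₀ hpos, mul_comm]
    exact hS s hs

lemma IsAlmostInvariant.exists_finite_support (hS : S.Finite) {u : ℓ²(G)}
    (hu : IsAlmostInvariant S ε u) :
    ∃ v : ℓ²(G), (Function.support v).Finite ∧ IsAlmostInvariant S ε v := by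
  classical
  have hopen : IsOpen {v : ℓ²(G) | IsAlmostInvariant S ε v} := by
    have hset : {v : ℓ²(G) | IsAlmostInvariant S ε v} =
        {0}ᶜ ∩ ⋂ s ∈ S, {v : ℓ²(G) | ‖regularRep G s v - v‖ < ε * ‖v‖} := by
      ext v
      simp only [IsAlmostInvariant, Set.mem_ofPred_eq, Set.mem_inter_iff, Set.mem_iInter]
      rfl
    rw [hset]
    refine isOpen_compl_singleton.inter (hS.isOpen_biInter fun s _ => ?_)
    exact isOpen_lt ((regularRep G s).continuous.sub continuous_id).norm
      (continuous_const.mul continuous_norm)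
  obtain ⟨F, hF⟩ := ((lp.hasSum_single ENNReal.ofNat_ne_top u).eventually
    (hopen.mem_nhds hu)).exists
  refine ⟨_, F.finite_toSet.subset fun x hx => ?_, hF⟩
  by_contra hxF
  refine hx ?_
  rw [lp.coeFn_sum, Finset.sum_apply]
  exact Finset.sum_eq_zero fun y hy =>
    lp.single_apply_ne (E := fun _ => ℂ) 2 y (u y) fun (h : x = y) => hxF (h ▸ hy)

lemma abs_exp_sub_one_le_exp_sub_one {t c : ℝ} (h : |t| ≤ c) :
    |Real.exp t - 1| ≤ Real.exp c - 1 := by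
  obtain ⟨hl, hr⟩ := abs_le.1 h
  have := Real.add_one_le_exp c
  have := Real.add_one_le_exp (-c)
  exact abs_le.2 ⟨by linarith [Real.exp_le_exp.2 hl], by linarith [Real.exp_le_exp.2 hr]⟩

/-- The square root of the density `exp (-(L * ℓ g))`. -/
noncomputable def expVector (ℓ : G → ℝ) (L : ℝ)
    (h : Summable fun g => Real.exp (-(L * ℓ g))) : ℓ²(G) :=
  ⟨fun g => (Real.exp (-(L * ℓ g) / 2) : ℂ), by
    refine memℓp_gen (h.congr fun g => ?_)
    rw [ENNReal.toReal_ofNat, Real.rpow_two, Complex.norm_real,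
      Real.norm_of_nonneg (Real.exp_pos _).le, ← Real.exp_nat_mul]
    push_cast
    ring_nf⟩

lemma norm_leftRegular_expVector_sub_le {ℓ : G → ℝ} {L c : ℝ} (hL : 0 ≤ L)
    (h : Summable fun g => Real.exp (-(L * ℓ g))) {s : G} (hs : ∀ g, |ℓ (s⁻¹ * g) - ℓ g| ≤ c) :
    ‖leftRegular s (expVector ℓ L h) - expVector ℓ L h‖ ≤
      (Real.exp (L * c / 2) - 1) * ‖expVector ℓ L h‖ := by
  have hc : 0 ≤ c := (abs_nonneg _).trans (hs 1)
  have hE : 0 ≤ Real.exp (L * c / 2) - 1 := sub_nonneg.2 (Real.one_le_exp (by positivity))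
  have hnorm : (Real.exp (L * c / 2) - 1) * ‖expVector ℓ L h‖ =
      ‖((Real.exp (L * c / 2) - 1 : ℝ) : ℂ) • expVector ℓ L h‖ := by
    rw [norm_smul, Complex.norm_real, Real.norm_of_nonneg hE]
  rw [hnorm]
  refine lp.norm_mono two_ne_zero fun g => ?_
  have hsplit : Real.exp (-(L * ℓ (s⁻¹ * g)) / 2) - Real.exp (-(L * ℓ g) / 2) =
      (Real.exp (L * (ℓ g - ℓ (s⁻¹ * g)) / 2) - 1) * Real.exp (-(L * ℓ g) / 2) := by
    rw [sub_mul, one_mul, ← Real.exp_add]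
    ring_nf
  change ‖(Real.exp (-(L * ℓ (s⁻¹ * g)) / 2) : ℂ) - (Real.exp (-(L * ℓ g) / 2) : ℂ)‖ ≤
    ‖((Real.exp (L * c / 2) - 1 : ℝ) : ℂ) * (Real.exp (-(L * ℓ g) / 2) : ℂ)‖
  rw [← Complex.ofReal_sub, ← Complex.ofReal_mul, Complex.norm_real, Complex.norm_real, hsplit,
    norm_mul, norm_mul, Real.norm_of_nonneg hE]
  gcongr
  refine abs_exp_sub_one_le_exp_sub_one ?_
  rw [abs_div, abs_mul, abs_of_nonneg hL, abs_two, abs_sub_comm]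
  gcongr
  exact hs g

lemma exists_isAlmostInvariant_of_summable_exp {ℓ : G → ℝ} {c : ℝ}
    (hS : ∀ s ∈ S, ∀ g, |ℓ (s⁻¹ * g) - ℓ g| ≤ c)
    (hℓ : ∀ η > 0, ∃ L, 0 < L ∧ L < η ∧ Summable fun g => Real.exp (-(L * ℓ g))) (hε : 0 < ε) :
    ∃ u : ℓ²(G), IsAlmostInvariant S ε u := by
  have hc : Filter.Tendsto (fun L : ℝ => Real.exp (L * c / 2) - 1) (nhds 0) (nhds 0) := by
    have : Continuous fun L : ℝ => Real.exp (L * c / 2) - 1 := by fun_prop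
    simpa using this.tendsto 0
  obtain ⟨η, hη, hη'⟩ := Metric.eventually_nhds_iff.1 (hc.eventually (gt_mem_nhds hε))
  obtain ⟨L, hL, hLη, hsum⟩ := hℓ η hη
  have hne : expVector ℓ L hsum ≠ 0 := fun h =>
    Complex.ofReal_ne_zero.2 (Real.exp_ne_zero _) (congrArg (fun u : ℓ²(G) => u 1) h)
  refine ⟨expVector ℓ L hsum, hne, fun s hs => ?_⟩
  refine (norm_leftRegular_expVector_sub_le hL.le hsum (hS s hs)).trans_lt ?_
  have := norm_pos_iff.2 hne
  gcongr
  exact hη' (by rwa [dist_zero_right, Real.norm_of_nonneg hL.le])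

end AlmostInvariant

section Contraction

lemma summable_pow_length {α : Type*} [Fintype α] {r : ℝ} (hr : 0 ≤ r)
    (h : Fintype.card α * r < 1) : Summable fun w : List α => r ^ w.length := by
  rw [← List.equivSigmaTuple.symm.summable_iff]
  refine (summable_sigma_of_nonneg fun _ => pow_nonneg hr _).2 ⟨fun n => .of_finite, ?_⟩
  refine (summable_geometric_of_lt_one (by positivity) h).congr fun n => ?_
  simp [List.equivSigmaTuple, tsum_fintype, mul_pow]

variable {X F : Type*} [Finite F] {ℓ : X → ℝ} {σ : X → F × X × X} {q r : ℝ}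

lemma summable_exp_of_contraction (hσ : Function.Injective σ)
    (hℓ : ∀ x, ℓ (σ x).2.1 + ℓ (σ x).2.2 ≤ q * ℓ x + r) {L : ℝ} (hL : 0 ≤ L)
    (h : Summable fun x => Real.exp (-(L * ℓ x))) :
    Summable fun x => Real.exp (-(q * L * ℓ x)) := by
  have hprod : Summable fun z : F × X × X =>
      (1 : ℝ) * (Real.exp (-(L * ℓ z.2.1)) * Real.exp (-(L * ℓ z.2.2))) :=
    (Summable.of_finite (f := fun _ : F => (1 : ℝ))).mul_of_nonneg
      (h.mul_of_nonneg h (fun _ => (Real.exp_pos _).le) fun _ => (Real.exp_pos _).le)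
      (fun _ => zero_le_one) fun _ => by positivity
  refine .of_nonneg_of_le (fun x => (Real.exp_pos _).le) (fun x => ?_)
    ((hprod.comp_injective hσ).mul_left (Real.exp (L * r)))
  simp only [Function.comp_apply, one_mul]
  rw [← Real.exp_add, ← Real.exp_add, Real.exp_le_exp]
  linarith [mul_le_mul_of_nonneg_left (hℓ x) hL]

lemma exists_lt_summable_exp_of_contraction (hσ : Function.Injective σ)
    (hℓ : ∀ x, ℓ (σ x).2.1 + ℓ (σ x).2.2 ≤ q * ℓ x + r) (hq0 : 0 < q) (hq1 : q < 1) {L₀ : ℝ}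
    (hL₀ : 0 < L₀) (h : Summable fun x => Real.exp (-(L₀ * ℓ x))) {η : ℝ} (hη : 0 < η) :
    ∃ L, 0 < L ∧ L < η ∧ Summable fun x => Real.exp (-(L * ℓ x)) := by
  have hpow (n : ℕ) : Summable fun x => Real.exp (-(q ^ n * L₀ * ℓ x)) := by
    induction n with
    | zero => simpa using h
    | succ n ih =>
      simpa only [pow_succ', mul_assoc] using
        summable_exp_of_contraction hσ hℓ (by positivity) ih
  obtain ⟨n, hn⟩ := exists_pow_lt_of_lt_one (div_pos hη hL₀) hq1
  exact ⟨q ^ n * L₀, by positivity, (lt_div_iff₀ hL₀).1 hn, hpow n⟩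

end Contraction

/-! ### The Grigorchuk group -/

namespace Grigorchuk

/-- The generators of the Grigorchuk group. -/
inductive Letter
  | a | b | c | d
  deriving DecidableEq

namespace Letter

instance : Fintype Letter := ⟨{a, b, c, d}, fun l => by cases l <;> decide⟩

/-- The action of a letter on the first level of the binary tree. -/
def flip : Letter → Bool → Bool
  | a, x => !x
  | _, x => x

/-- The section of a letter at a vertex of the first level, as a word of length at most one. -/
def sec : Letter → Bool → List Letter
  | a, _ => []
  | b, false => [a]
  | b, true => [c]
  | c, false => [a]
  | c, true => [d]
  | d, false => []
  | d, true => [b]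

/-- The weight of a letter. The product of two distinct letters other than `a` weighs less than the
two letters together, and the sections of a letter `l ≠ a` weigh at most `9 / 10` of `a` and `l`
together. -/
def wt : Letter → ℕ
  | a => 3
  | b => 4
  | c => 3
  | d => 2

/-- The action of a letter on the vertices of the binary tree. -/
def act : Letter → List Bool → List Bool
  | _, [] => []
  | a, x :: v => (!x) :: v
  | b, false :: v => false :: act a v
  | b, true :: v => true :: act c v
  | c, false :: v => false :: act a v
  | c, true :: v => true :: act d v
  | d, false :: v => false :: v
  | d, true :: v => true :: act b v

lemma act_involutive (l : Letter) : Function.Involutive l.act := by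
  intro v
  induction v generalizing l with
  | nil => cases l <;> simp [act]
  | cons x v ih => cases l <;> cases x <;> simp [act, ih]

/-- A letter as a permutation of the vertices of the binary tree. -/
def gen (l : Letter) : Equiv.Perm (List Bool) := l.act_involutive.toPerm

lemma gen_mul_self (l : Letter) : l.gen * l.gen = 1 := Equiv.ext l.act_involutive

lemma gen_inv (l : Letter) : l.gen⁻¹ = l.gen := inv_eq_of_mul_eq_one_left l.gen_mul_self

lemma act_act_triple (v : List Bool) :
    b.act (c.act v) = d.act v ∧ c.act (d.act v) = b.act v ∧ d.act (b.act v) = c.act v := by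
  induction v with
  | nil => simp [act]
  | cons x v ih => cases x <;> simp [act, ih, act_involutive _ _]

lemma exists_gen_mul_gen {l m : Letter} (hl : l ≠ a) (hm : m ≠ a) (hlm : l ≠ m) :
    ∃ n : Letter, l.gen * m.gen = n.gen ∧ n.wt < l.wt + m.wt := by
  have hbc : b.gen * c.gen = d.gen := Equiv.ext fun v => (act_act_triple v).1
  have hcd : c.gen * d.gen = b.gen := Equiv.ext fun v => (act_act_triple v).2.1
  have hdb : d.gen * b.gen = c.gen := Equiv.ext fun v => (act_act_triple v).2.2
  have hswap {x y z : Letter} (h : x.gen * y.gen = z.gen) : y.gen * x.gen = z.gen := by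
    simpa only [mul_inv_rev, gen_inv] using congrArg (·⁻¹) h
  cases l <;> cases m <;> first | contradiction | skip
  exacts [⟨d, hbc, by decide⟩, ⟨c, hswap hdb, by decide⟩, ⟨d, hswap hbc, by decide⟩,
    ⟨b, hcd, by decide⟩, ⟨c, hdb, by decide⟩, ⟨b, hswap hcd, by decide⟩]

end Letter

open Letter

/-- The permutation of the binary tree represented by a word. -/
def eval (w : List Letter) : Equiv.Perm (List Bool) := (w.map gen).prod

lemma eval_cons (l : Letter) (w : List Letter) : eval (l :: w) = l.gen * eval w := by
  simp [eval]

lemma eval_append (v w : List Letter) : eval (v ++ w) = eval v * eval w := by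
  simp [eval]

lemma eval_reverse (w : List Letter) : eval w.reverse = (eval w)⁻¹ := by
  simp [eval, List.prod_inv_reverse, gen_inv, Function.comp_def]

/-- The action of a word on the first level. -/
def flipWord : List Letter → Bool → Bool
  | [], x => x
  | l :: w, x => l.flip (flipWord w x)

/-- The section of a word at a vertex of the first level. -/
def secWord : List Letter → Bool → List Letter
  | [], _ => []
  | l :: w, x => l.sec (flipWord w x) ++ secWord w x

/-- The weight of a word. -/
def wtWord (w : List Letter) : ℕ := (w.map wt).sum

lemma wtWord_cons (l : Letter) (w : List Letter) : wtWord (l :: w) = l.wt + wtWord w := by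
  simp [wtWord]

lemma wtWord_append (v w : List Letter) : wtWord (v ++ w) = wtWord v + wtWord w := by
  simp [wtWord]

lemma length_le_wtWord (w : List Letter) : w.length ≤ wtWord w := by
  induction w with
  | nil => simp
  | cons l w ih =>
    have hl : 1 ≤ l.wt := by cases l <;> decide
    rw [List.length_cons, wtWord_cons]
    omega

lemma gen_apply_cons (l : Letter) (x : Bool) (v : List Bool) :
    l.gen (x :: v) = l.flip x :: eval (l.sec x) v := by
  cases l <;> cases x <;> simp [gen, act, Letter.flip, sec, eval]

lemma eval_apply_nil (w : List Letter) : eval w [] = [] := by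
  induction w with
  | nil => rfl
  | cons l w ih => rw [eval_cons, Equiv.Perm.mul_apply, ih]; cases l <;> rfl

lemma eval_apply_cons (w : List Letter) (x : Bool) (v : List Bool) :
    eval w (x :: v) = flipWord w x :: eval (secWord w x) v := by
  induction w with
  | nil => rfl
  | cons l w ih =>
    rw [eval_cons, Equiv.Perm.mul_apply, ih, gen_apply_cons, flipWord, secWord, eval_append,
      Equiv.Perm.mul_apply]

lemma flipWord_not (w : List Letter) (x : Bool) : flipWord w (!x) = !flipWord w x := by
  induction w with
  | nil => rfl
  | cons l w ih => cases l <;> simp [flipWord, Letter.flip, ih]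

lemma flipWord_eq_self_or_not (w : List Letter) :
    (∀ x, flipWord w x = x) ∨ ∀ x, flipWord w x = !x := by
  have h := flipWord_not w false
  cases hw : flipWord w false <;> simp_all

lemma flipWord_append (v w : List Letter) (x : Bool) :
    flipWord (v ++ w) x = flipWord v (flipWord w x) := by
  induction v with
  | nil => rfl
  | cons l v ih => simp [flipWord, ih]

lemma secWord_append (v w : List Letter) (x : Bool) :
    secWord (v ++ w) x = secWord v (flipWord w x) ++ secWord w x := by
  induction v with
  | nil => rfl
  | cons l v ih => simp [secWord, ih, flipWord_append]

lemma eval_eq_of_sections {v w : List Letter} (hflip : flipWord v false = flipWord w false)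
    (hsec : ∀ x, eval (secWord v x) = eval (secWord w x)) : eval v = eval w := by
  have hflip' : flipWord v true = flipWord w true := by
    simpa only [Bool.not_false, hflip, ← flipWord_not w] using flipWord_not v false
  refine Equiv.ext fun u => ?_
  match u with
  | [] => rw [eval_apply_nil, eval_apply_nil]
  | false :: u => rw [eval_apply_cons, eval_apply_cons, hflip, hsec]
  | true :: u => rw [eval_apply_cons, eval_apply_cons, hflip', hsec]

/-- Words in which letters other than `a` are never adjacent. -/
def Reduced (w : List Letter) : Prop := w.IsChain fun l m => l = a ∨ m = a

lemma Reduced.eq_a {l m : Letter} {w : List Letter} (h : Reduced (l :: m :: w)) (hl : l ≠ a) :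
    m = a :=
  (List.isChain_cons_cons.1 h).1.resolve_left hl

lemma exists_eval_eq_of_pair {l m : Letter} (hl : l ≠ a) (hm : m ≠ a) :
    ∃ z, eval z = eval [l, m] ∧ wtWord z < wtWord [l, m] := by
  obtain rfl | hlm := eq_or_ne l m
  · refine ⟨[], by simp [eval, gen_mul_self], ?_⟩
    cases l <;> decide
  · obtain ⟨n, hn, hwt⟩ := exists_gen_mul_gen hl hm hlm
    exact ⟨[n], by simpa [eval] using hn.symm, by simpa [wtWord] using hwt⟩

lemma exists_eval_eq_of_not_reduced {w : List Letter} (hw : ¬ Reduced w) :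
    ∃ z, eval z = eval w ∧ wtWord z < wtWord w := by
  rw [Reduced, List.isChain_iff_forall_rel_of_append_cons_cons] at hw
  push Not at hw
  obtain ⟨l, m, u, v, rfl, hl, hm⟩ := hw
  obtain ⟨z, hz, hwt⟩ := exists_eval_eq_of_pair hl hm
  rw [show u ++ l :: m :: v = u ++ ([l, m] ++ v) by simp]
  refine ⟨u ++ (z ++ v), by simp only [eval_append, hz], ?_⟩
  simp only [wtWord_append]
  omega

/-- The total weight of the two sections of a word. -/
def secWt (w : List Letter) : ℕ := wtWord (secWord w false) + wtWord (secWord w true)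

lemma secWt_cons (l : Letter) (w : List Letter) :
    secWt (l :: w) = wtWord (l.sec false) + wtWord (l.sec true) + secWt w := by
  have h : flipWord w true = !flipWord w false := flipWord_not w false
  simp only [secWt, secWord, wtWord_append, h]
  cases flipWord w false <;> simp only [Bool.not_false, Bool.not_true] <;> omega

lemma wtWord_secWord_not_add (w : List Letter) (x : Bool) :
    wtWord (secWord w (!x)) + wtWord (secWord w x) = secWt w := by
  cases x <;> simp [secWt, add_comm]

lemma ten_mul_secWt_le_of_reduced {w : List Letter} (hw : Reduced w) :
    10 * secWt w ≤ 9 * (wtWord w + 3) ∧ (w.head? = some a → 10 * secWt w ≤ 9 * wtWord w) := by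
  induction w with
  | nil => simp [secWt, secWord, wtWord]
  | cons l w ih =>
    have ih := ih (List.IsChain.tail hw)
    rw [secWt_cons, wtWord_cons]
    by_cases hl : l = a
    · subst hl
      simp only [sec, wt, wtWord, List.map_nil, List.sum_nil] at *
      constructor <;> intros <;> omega
    · have hsec : 10 * (wtWord (l.sec false) + wtWord (l.sec true)) ≤ 9 * (l.wt + 3) := by
        cases l <;> decide
      have htail : 10 * secWt w ≤ 9 * wtWord w := by
        cases w with
        | nil => simp [secWt, secWord, wtWord]
        | cons m w => exact ih.2 (congrArg some (hw.eq_a hl))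
      exact ⟨by omega, fun h => absurd (Option.some.inj h) hl⟩

lemma eval_pow_apply_nil (w : List Letter) (n : ℕ) : (eval w ^ n) [] = [] := by
  induction n with
  | zero => rfl
  | succ n ih => rw [pow_succ', Equiv.Perm.mul_apply, ih, eval_apply_nil]

lemma eval_pow_apply_cons {w : List Letter} (hw : ∀ x, flipWord w x = x) (n : ℕ) (x : Bool)
    (v : List Bool) : (eval w ^ n) (x :: v) = x :: (eval (secWord w x) ^ n) v := by
  induction n with
  | zero => rfl
  | succ n ih =>
    rw [pow_succ', Equiv.Perm.mul_apply, ih, eval_apply_cons, hw, pow_succ', Equiv.Perm.mul_apply]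

lemma isOfFinOrder_eval_of_sections {w : List Letter} (hw : ∀ x, flipWord w x = x)
    (hsec : ∀ x, IsOfFinOrder (eval (secWord w x))) : IsOfFinOrder (eval w) := by
  obtain ⟨m, hm, hm1⟩ := isOfFinOrder_iff_pow_eq_one.1 (hsec false)
  obtain ⟨n, hn, hn1⟩ := isOfFinOrder_iff_pow_eq_one.1 (hsec true)
  refine isOfFinOrder_iff_pow_eq_one.2 ⟨m * n, Nat.mul_pos hm hn, Equiv.ext fun v => ?_⟩
  match v with
  | [] => exact eval_pow_apply_nil w _
  | false :: v => rw [eval_pow_apply_cons hw, pow_mul, hm1, one_pow]; rfl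
  | true :: v => rw [eval_pow_apply_cons hw, mul_comm m n, pow_mul, hn1, one_pow]; rfl

lemma isOfFinOrder_eval_of_secWt_lt {w : List Letter} (hw : secWt w < wtWord w)
    (ih : ∀ z, wtWord z < wtWord w → IsOfFinOrder (eval z)) : IsOfFinOrder (eval w) := by
  obtain hflip | hflip := flipWord_eq_self_or_not w
  · refine isOfFinOrder_eval_of_sections hflip fun x => ih _ ?_
    have := wtWord_secWord_not_add w x
    omega
  · have hsq : IsOfFinOrder (eval (w ++ w)) := by
      refine isOfFinOrder_eval_of_sections (fun x => ?_) fun x => ih _ ?_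
      · simp [flipWord_append, hflip]
      · rwa [secWord_append, wtWord_append, hflip, wtWord_secWord_not_add]
    rw [eval_append, ← pow_two] at hsq
    exact hsq.of_pow two_ne_zero

lemma isOfFinOrder_eval_of_not_reduced {w : List Letter} (hw : ¬ Reduced w)
    (ih : ∀ z, wtWord z < wtWord w → IsOfFinOrder (eval z)) : IsOfFinOrder (eval w) := by
  obtain ⟨z, hz, hwt⟩ := exists_eval_eq_of_not_reduced hw
  exact hz ▸ ih z hwt

lemma isOfFinOrder_eval_cons_a {w : List Letter}
    (ih : ∀ z, wtWord z < wtWord (a :: w) → IsOfFinOrder (eval z)) :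
    IsOfFinOrder (eval (a :: w)) := by
  by_cases hw : Reduced (a :: w)
  · refine isOfFinOrder_eval_of_secWt_lt ?_ ih
    have h := (ten_mul_secWt_le_of_reduced hw).2 rfl
    have hpos := length_le_wtWord (a :: w)
    rw [List.length_cons] at hpos
    omega
  · exact isOfFinOrder_eval_of_not_reduced hw ih

theorem isOfFinOrder_eval (w : List Letter) : IsOfFinOrder (eval w) := by
  induction hn : wtWord w using Nat.strong_induction_on generalizing w with
  | _ n ih =>
    subst hn
    replace ih (z) (hz : wtWord z < wtWord w) : IsOfFinOrder (eval z) := ih _ hz z rfl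
    by_cases hred : Reduced w
    swap
    · exact isOfFinOrder_eval_of_not_reduced hred ih
    match w with
    | [] => exact IsOfFinOrder.one
    | a :: w => exact isOfFinOrder_eval_cons_a ih
    | [l] => exact isOfFinOrder_iff_pow_eq_one.2 ⟨2, two_pos, by simp [eval, pow_two, gen_mul_self]⟩
    | l :: m :: w =>
      by_cases hl : l = a
      · exact hl ▸ isOfFinOrder_eval_cons_a (hl ▸ ih)
      obtain rfl := hred.eq_a hl
      have hwt : wtWord (a :: (w ++ [l])) = wtWord (l :: a :: w) := by
        simp only [wtWord_cons, wtWord_append, show wtWord [] = 0 from rfl]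
        omega
      have hconj : eval (l :: a :: w) = MulAut.conj l.gen (eval (a :: (w ++ [l]))) := by
        simp [eval, mul_assoc]
      rw [hconj]
      exact (MulAut.conj l.gen).toMonoidHom.isOfFinOrder
        (isOfFinOrder_eval_cons_a (hwt ▸ ih))

/-- The Grigorchuk group. -/
def grigorchuk : Subgroup (Equiv.Perm (List Bool)) where
  carrier := Set.range eval
  one_mem' := ⟨[], rfl⟩
  mul_mem' := by
    rintro _ _ ⟨v, rfl⟩ ⟨w, rfl⟩
    exact ⟨v ++ w, eval_append v w⟩
  inv_mem' := by
    rintro _ ⟨w, rfl⟩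
    exact ⟨w.reverse, eval_reverse w⟩

/-- The element of the Grigorchuk group represented by a word. -/
def elt (w : List Letter) : grigorchuk := ⟨eval w, w, rfl⟩

lemma elt_surjective : Function.Surjective elt := by
  rintro ⟨_, w, rfl⟩
  exact ⟨w, rfl⟩

lemma elt_cons (l : Letter) (w : List Letter) : elt (l :: w) = elt [l] * elt w :=
  Subtype.ext (eval_append [l] w)

lemma elt_singleton_inv (l : Letter) : (elt [l])⁻¹ = elt [l] :=
  inv_eq_of_mul_eq_one_left (Subtype.ext (by simpa [elt, eval] using l.gen_mul_self))

lemma closure_range_elt_singleton : Subgroup.closure (Set.range fun l => elt [l]) = ⊤ := by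
  refine eq_top_iff.2 fun g _ => ?_
  obtain ⟨w, rfl⟩ := elt_surjective g
  induction w with
  | nil => exact Subgroup.one_mem _
  | cons l w ih =>
    rw [elt_cons]
    exact mul_mem (Subgroup.subset_closure ⟨l, rfl⟩) (ih trivial)

lemma isMulTorsion_grigorchuk : IsMulTorsion grigorchuk := by
  intro g
  obtain ⟨w, rfl⟩ := elt_surjective g
  rw [← Submonoid.isOfFinOrder_coe]
  exact isOfFinOrder_eval w

/-- A substitution lifting a word to one which fixes the vertex `[true]` and has it as section
there. -/
def liftWord : List Letter → List Letter
  | [] => []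
  | a :: w => a :: b :: a :: liftWord w
  | b :: w => d :: liftWord w
  | c :: w => b :: liftWord w
  | d :: w => c :: liftWord w

lemma eval_liftWord_apply (w : List Letter) (v : List Bool) :
    eval (liftWord w) (true :: v) = true :: eval w v := by
  have h : flipWord (liftWord w) true = true ∧ secWord (liftWord w) true = w := by
    induction w with
    | nil => exact ⟨rfl, rfl⟩
    | cons l w ih => cases l <;> simp [liftWord, flipWord, secWord, ih, Letter.flip, sec]
  rw [eval_apply_cons, h.1, h.2]

lemma infinite_grigorchuk : Infinite grigorchuk := by
  choose w hw using elt_surjective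
  let Λ : grigorchuk → grigorchuk := fun g => elt (liftWord (w g))
  have hΛ (g v) : (Λ g).1 (true :: v) = true :: g.1 v := by
    conv_rhs => rw [← hw g]
    exact eval_liftWord_apply _ _
  have hinj : Function.Injective Λ := by
    intro g h hgh
    refine Subtype.ext (Equiv.ext fun v => ?_)
    have := hΛ g v
    rw [hgh, hΛ h v] at this
    exact (List.cons.inj this).2.symm
  by_contra hfin
  rw [not_infinite_iff_finite] at hfin
  obtain ⟨g, hg⟩ := Finite.surjective_of_injective hinj (elt [a])
  have hroot := hΛ g []
  rw [hg] at hroot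
  simp [elt, eval, gen, act] at hroot

/-- The word length of an element with respect to the weights of the letters. -/
noncomputable def len (g : grigorchuk) : ℕ := sInf {n | ∃ w, elt w = g ∧ wtWord w = n}

lemma exists_word_len (g : grigorchuk) : ∃ w, elt w = g ∧ wtWord w = len g := by
  obtain ⟨w, hw⟩ := elt_surjective g
  exact Nat.sInf_mem (s := {n | ∃ w, elt w = g ∧ wtWord w = n}) ⟨_, w, hw, rfl⟩

lemma len_elt_le (w : List Letter) : len (elt w) ≤ wtWord w := Nat.sInf_le ⟨w, rfl, rfl⟩

lemma len_elt_singleton_mul_le (l : Letter) (g : grigorchuk) :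
    len (elt [l] * g) ≤ len g + 4 := by
  obtain ⟨w, rfl, hw⟩ := exists_word_len g
  have hle := len_elt_le (l :: w)
  have hl : l.wt ≤ 4 := by cases l <;> decide
  rw [wtWord_cons, hw] at hle
  rw [← elt_cons]
  omega

lemma abs_len_sub_le (l : Letter) (g : grigorchuk) :
    |(len ((elt [l])⁻¹ * g) : ℝ) - len g| ≤ 4 := by
  have h₁ : (len ((elt [l])⁻¹ * g) : ℝ) ≤ len g + 4 := by
    exact_mod_cast elt_singleton_inv l ▸ len_elt_singleton_mul_le l g
  have h₂ : (len g : ℝ) ≤ len ((elt [l])⁻¹ * g) + 4 := by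
    exact_mod_cast mul_inv_cancel_left (elt [l]) g ▸ len_elt_singleton_mul_le l _
  exact abs_sub_le_iff.2 ⟨by linarith, by linarith⟩

lemma reduced_of_wtWord_eq_len {w : List Letter} (hw : wtWord w = len (elt w)) : Reduced w := by
  by_contra h
  obtain ⟨z, hz, hwt⟩ := exists_eval_eq_of_not_reduced h
  have hle := len_elt_le z
  rw [show elt z = elt w from Subtype.ext hz] at hle
  omega

lemma exists_contracting_sections : ∃ σ : grigorchuk → Bool × grigorchuk × grigorchuk,
    Function.Injective σ ∧
      ∀ g, (len (σ g).2.1 : ℝ) + len (σ g).2.2 ≤ 9 / 10 * len g + 27 / 10 := by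
  choose w hw hlen using exists_word_len
  refine ⟨fun g => (flipWord (w g) false, elt (secWord (w g) false), elt (secWord (w g) true)),
    fun g h hgh => ?_, fun g => ?_⟩
  · simp only [Prod.mk.injEq] at hgh
    obtain ⟨hflip, hfalse, htrue⟩ := hgh
    rw [← hw g, ← hw h]
    exact Subtype.ext (eval_eq_of_sections hflip
      (Bool.forall_bool.2 ⟨congrArg Subtype.val hfalse, congrArg Subtype.val htrue⟩))
  · have hsec : 10 * secWt (w g) ≤ 9 * (len g + 3) :=
      hlen g ▸ (ten_mul_secWt_le_of_reduced
        (reduced_of_wtWord_eq_len (by rw [hw, hlen]))).1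
    have hfalse := len_elt_le (secWord (w g) false)
    have htrue := len_elt_le (secWord (w g) true)
    have hle : 10 * (len (elt (secWord (w g) false)) + len (elt (secWord (w g) true))) ≤
        9 * (len g + 3) := by
      rw [secWt] at hsec
      omega
    have : 10 * ((len (elt (secWord (w g) false)) : ℝ) + len (elt (secWord (w g) true))) ≤
        9 * (len g + 3) := by
      exact_mod_cast hle
    linarith

lemma summable_exp_log_five_mul_len :
    Summable fun g => Real.exp (-(Real.log 5 * len g)) := by
  choose w hw hlen using exists_word_len
  have hsum : Summable fun v : List Letter => (1 / 5 : ℝ) ^ v.length :=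
    summable_pow_length (by norm_num) (by norm_num [show Fintype.card Letter = 4 from rfl])
  refine .of_nonneg_of_le (fun g => (Real.exp_pos _).le) (fun g => ?_)
    (hsum.comp_injective (Function.LeftInverse.injective hw))
  rw [mul_comm, ← mul_neg, Real.exp_nat_mul, Real.exp_neg, Real.exp_log (by norm_num), ← one_div]
  exact pow_le_pow_of_le_one (by norm_num) (by norm_num) (hlen g ▸ length_le_wtWord (w g))

theorem exists_infinite_isMulTorsion_isAlmostInvariant :
    ∃ (A : Type) (_ : Group A) (S : Set A), S.Finite ∧ Subgroup.closure S = ⊤ ∧ IsMulTorsion A ∧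
      Infinite A ∧ ∀ ε > 0, ∃ u : ℓ²(A), IsAlmostInvariant S ε u := by
  refine ⟨grigorchuk, inferInstance, Set.range fun l => elt [l], Set.finite_range _,
    closure_range_elt_singleton, isMulTorsion_grigorchuk, infinite_grigorchuk, fun ε hε => ?_⟩
  obtain ⟨σ, hσ, hlen⟩ := exists_contracting_sections
  exact exists_isAlmostInvariant_of_summable_exp (Set.forall_mem_range.2 abs_len_sub_le)
    (fun η hη => exists_lt_summable_exp_of_contraction hσ hlen (by norm_num) (by norm_num)
      (Real.log_pos (by norm_num)) summable_exp_log_five_mul_len hη) hε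

end Grigorchuk

/-! ### Wreath products -/

section WreathProduct

open RegularWreathProduct

variable {A W : Type*} [Group A] [Group W]

/-- The base group of a regular wreath product. -/
def base : (A → W) →* W ≀ᵣ A where
  toFun a := ⟨a, 1⟩
  map_one' := rfl
  map_mul' _ _ := by ext <;> simp

@[simp] lemma base_left (a : A → W) : (base a).left = a := rfl

@[simp] lemma base_right (a : A → W) : (base a).right = 1 := rfl

lemma base_left_of_right_eq_one {g : W ≀ᵣ A} (hg : g.right = 1) : base g.left = g :=
  RegularWreathProduct.ext rfl hg.symm

lemma inl_conj_base (x : A) (a : A → W) :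
    inl x * base a * (inl x)⁻¹ = base fun y => a (x⁻¹ * y) := by
  ext <;> simp

lemma inl_conj_mulSingle [DecidableEq A] (x y : A) (w : W) :
    inl x * base (Pi.mulSingle y w) * (inl x)⁻¹ = base (Pi.mulSingle (x * y) w) := by
  rw [inl_conj_base]
  congr 1
  funext z
  simp only [Pi.mulSingle_apply, inv_mul_eq_iff_eq_mul]

lemma isOfFinOrder_pi {X : Type*} {a : X → W} (hW : IsMulTorsion W) {E : Set X} (hE : E.Finite)
    {N : ℕ} (hN : 0 < N) (ha : ∀ x ∉ E, a x ^ N = 1) : IsOfFinOrder a := by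
  refine isOfFinOrder_iff_pow_eq_one.2 ⟨N * ∏ x ∈ hE.toFinset, orderOf (a x),
    Nat.mul_pos hN (Finset.prod_pos fun x _ => (hW (a x)).orderOf_pos), funext fun x => ?_⟩
  by_cases hx : x ∈ E
  · exact orderOf_dvd_iff_pow_eq_one.1
      (Dvd.dvd.mul_left (Finset.dvd_prod_of_mem _ (hE.mem_toFinset.2 hx)) N)
  · rw [Pi.pow_apply, pow_mul, ha x hx, one_pow, Pi.one_apply]

lemma isOfFinOrder_of_base_pow {g : W ≀ᵣ A} (hA : IsMulTorsion A)
    (hg : ∀ n : ℕ, IsOfFinOrder (g ^ n).left) : IsOfFinOrder g := by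
  have hr : (g ^ orderOf g.right).right = 1 := by
    rw [← rightHom_eq_right, map_pow, rightHom_eq_right, pow_orderOf_eq_one]
  have hpow := MonoidHom.isOfFinOrder (base : (A → W) →* W ≀ᵣ A) (hg (orderOf g.right))
  rw [base_left_of_right_eq_one hr] at hpow
  exact hpow.of_pow (hA g.right).orderOf_pos.ne'

lemma isMulTorsion_wreath_of_finite [Finite A] (hW : IsMulTorsion W) : IsMulTorsion (W ≀ᵣ A) :=
  fun _ => isOfFinOrder_of_base_pow (fun a => isOfFinOrder_of_finite a) fun _ =>
    isOfFinOrder_pi hW Set.finite_univ one_pos fun x hx => absurd (Set.mem_univ x) hx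

lemma exists_finite_left_mem_closure {ι : Type*} {f : ι → A → W} {g : W ≀ᵣ A}
    (hg : g ∈ Subgroup.closure (Set.range inl ∪ Set.range fun i => base (f i))) :
    ∃ D : Set A, D.Finite ∧ ∀ x,
      g.left x ∈ Subgroup.closure (Set.image2 (fun i d => f i (d⁻¹ * x)) Set.univ D) := by
  induction hg using Subgroup.closure_induction with
  | mem b hb =>
    rcases hb with ⟨a, rfl⟩ | ⟨i, rfl⟩
    · exact ⟨∅, Set.finite_empty, fun x => one_mem _⟩
    · exact ⟨{1}, Set.finite_singleton 1, fun x => Subgroup.subset_closure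
        ⟨i, Set.mem_univ i, 1, rfl, by simp⟩⟩
  | one => exact ⟨∅, Set.finite_empty, fun x => one_mem _⟩
  | mul a b _ _ iha ihb =>
    obtain ⟨D, hD, ha⟩ := iha
    obtain ⟨E, hE, hb⟩ := ihb
    refine ⟨D ∪ (a.right * ·) '' E, hD.union (hE.image _), fun x => ?_⟩
    rw [mul_left, Pi.mul_apply]
    refine mul_mem (Subgroup.closure_mono (Set.image2_subset_left Set.subset_union_left) (ha x))
      (Subgroup.closure_mono ?_ (hb (a.right⁻¹ * x)))
    rintro _ ⟨i, hi, d, hd, rfl⟩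
    exact ⟨i, hi, a.right * d, Or.inr ⟨d, hd, rfl⟩, by simp [mul_assoc]⟩
  | inv a _ iha =>
    obtain ⟨D, hD, ha⟩ := iha
    refine ⟨(a.right⁻¹ * ·) '' D, hD.image _, fun x => ?_⟩
    rw [inv_left]
    refine inv_mem (Subgroup.closure_mono ?_ (ha (a.right * x)))
    rintro _ ⟨i, hi, d, hd, rfl⟩
    exact ⟨i, hi, a.right⁻¹ * d, ⟨d, hd, rfl⟩, by simp [mul_assoc]⟩

end WreathProduct

/-! ### Sparse sequences -/

/-- A sequence none of whose terms has the form `p i * (p j)⁻¹ * p k` with smaller indices. -/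
def IsSparse {A : Type*} [Group A] (p : ℕ → A) : Prop :=
  ∀ n, ∀ i < n, ∀ j < n, ∀ k < n, p n ≠ p i * (p j)⁻¹ * p k

namespace IsSparse

variable {A : Type*} [Group A]

open scoped Pointwise in
lemma exists_of_infinite [Infinite A] : ∃ p : ℕ → A, IsSparse p := by
  classical
  have hnew (T : Finset A) : ∃ x, x ∉ T * T⁻¹ * T := Infinite.exists_notMem_finset _
  choose new hnew using hnew
  let T (n : ℕ) : Finset A := Nat.rec ∅ (fun _ t => insert (new t) t) n
  have hmono : Monotone T := monotone_nat_of_le_succ fun n => Finset.subset_insert _ _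
  have hmem {i n : ℕ} (hi : i < n) : new (T i) ∈ T n :=
    hmono (Nat.succ_le_of_lt hi) (Finset.mem_insert_self _ _)
  refine ⟨fun n => new (T n), fun n i hi j hj k hk h => hnew (T n) ?_⟩
  rw [show new (T n) = _ from h]
  exact Finset.mul_mem_mul (Finset.mul_mem_mul (hmem hi) (Finset.inv_mem_inv (hmem hj))) (hmem hk)

variable {p : ℕ → A} {a b c d : ℕ}

lemma injective (hp : IsSparse p) : Function.Injective p := by
  have hne {i n : ℕ} (hi : i < n) : p n ≠ p i := fun h => hp n i hi i hi i hi (by simp [h])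
  intro i n h
  rcases lt_trichotomy i n with hlt | heq | hgt
  · exact absurd h.symm (hne hlt)
  · exact heq
  · exact absurd h (hne hgt)

lemma max_le_max (hp : IsSparse p) (hcd : c ≠ d) (h : p a * (p b)⁻¹ = p c * (p d)⁻¹) :
    max c d ≤ max a b := by
  by_contra! hlt
  rcases lt_or_gt_of_ne hcd with hc | hc
  · refine hp d b (by omega) a (by omega) c hc ?_
    rw [← inv_inj, mul_inv_rev, mul_inv_rev, inv_inv, inv_inv] at h
    rw [h, inv_mul_cancel_right]
  · exact hp c a (by omega) b (by omega) d hc (by rw [h, inv_mul_cancel_right])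

lemma eq_of_even_odd (hp : IsSparse p)
    (h : p (2 * a) * (p (2 * b + 1))⁻¹ = p (2 * c) * (p (2 * d + 1))⁻¹) : a = c := by
  have h₁ := hp.max_le_max (by omega) h
  have h₂ := hp.max_le_max (by omega) h.symm
  by_contra hne
  obtain rfl : b = d := by omega
  have := hp.injective (mul_right_cancel h)
  omega

lemma exists_forall_lt (hp : IsSparse p) {g : A} (hg : g ≠ 1) :
    ∃ K, ∀ m n, p m * (p n)⁻¹ = g → m < K := by
  by_cases h : ∃ a b, p a * (p b)⁻¹ = g
  · obtain ⟨a, b, rfl⟩ := h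
    refine ⟨max a b + 1, fun m n hmn => Nat.lt_succ_of_le ((le_max_left m n).trans ?_)⟩
    refine hp.max_le_max ?_ hmn.symm
    rintro rfl
    exact hg (hmn.symm.trans (mul_inv_cancel _))
  · push Not at h
    exact ⟨0, fun m n hmn => absurd hmn (h m n)⟩

lemma exists_forall_lt_of_finite (hp : IsSparse p) {D : Set A} (hD : D.Finite) :
    ∃ K, ∀ d ∈ D, ∀ d' ∈ D, ∀ m n, d * p m = d' * p n → d ≠ d' → m < K := by
  suffices h : ∀ᶠ K in Filter.atTop, ∀ d ∈ D, ∀ d' ∈ D, ∀ m n, d * p m = d' * p n → d ≠ d' → m < K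
    from h.exists
  refine (Filter.eventually_all_finite hD).2 fun d _ =>
    (Filter.eventually_all_finite hD).2 fun d' _ => ?_
  rcases eq_or_ne d d' with rfl | hne
  · exact .of_forall fun K m n _ h => absurd rfl h
  · obtain ⟨K, hK⟩ := hp.exists_forall_lt (g := d⁻¹ * d') (by rwa [Ne, inv_mul_eq_one])
    filter_upwards [Filter.eventually_ge_atTop K] with L hL m n hmn _
    refine (hK m n ?_).trans_le hL
    rw [mul_inv_eq_iff_eq_mul, mul_assoc, ← hmn, inv_mul_cancel_left]

end IsSparse

/-! ### Lamps along a sparse sequence -/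

section Lamps

open RegularWreathProduct
open scoped commutatorElement

variable {A W : Type*} [Group W]

/-- The lamp configuration with value `h n` at `p (2 * n + e)` for `k ≤ n`; the two values of `e`
give disjoint configurations. -/
noncomputable def lampConfig (p : ℕ → A) (h : ℕ → W) (k : ℕ) (e : Fin 2) : A → W :=
  Function.extend (fun n : Set.Ici k => p (2 * n + e)) (fun n => h n) 1

/-- Every value of `h` is generated by the commutators of its values at late indices. -/
def IsTailPerfect (h : ℕ → W) : Prop :=
  ∀ k m, h m ∈ Subgroup.closure (Set.image2 (fun i j => ⁅h i, h j⁆) (Set.Ici k) (Set.Ici k))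

variable {p : ℕ → A} {h : ℕ → W} {k n : ℕ} {e : Fin 2}

lemma exists_of_lampConfig_ne_one {x : A} (hx : lampConfig p h k e x ≠ 1) :
    ∃ n, k ≤ n ∧ p (2 * n + e) = x := by
  by_contra hn
  exact hx (Function.extend_apply' _ _ _ fun ⟨n, hnx⟩ => hn ⟨n, n.2, hnx⟩)

variable [Group A]

/-- The group generated by `A` and the two lamp configurations starting at `k`. -/
noncomputable def lampGroup (p : ℕ → A) (h : ℕ → W) (k : ℕ) : Subgroup (W ≀ᵣ A) :=
  Subgroup.closure (Set.range inl ∪ Set.range fun e => base (lampConfig p h k e))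

lemma inl_mem_lampGroup (k : ℕ) (x : A) : inl x ∈ lampGroup p h k :=
  Subgroup.subset_closure (Or.inl ⟨x, rfl⟩)

lemma base_lampConfig_mem_lampGroup (k : ℕ) (e : Fin 2) :
    base (lampConfig p h k e) ∈ lampGroup p h k :=
  Subgroup.subset_closure (Or.inr ⟨e, rfl⟩)

namespace IsSparse

lemma eq_of_lamp_eq (hp : IsSparse p) {m n : ℕ} {e e' : Fin 2}
    (hmn : p (2 * m + e) = p (2 * n + e')) : m = n ∧ e = e' := by
  have := hp.injective hmn
  omega

lemma lampConfig_apply (hp : IsSparse p) (hn : k ≤ n) :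
    lampConfig p h k e (p (2 * n + e)) = h n :=
  Function.Injective.extend_apply (fun _ _ hmn => Subtype.ext (hp.eq_of_lamp_eq hmn).1) _ _
    (⟨n, hn⟩ : Set.Ici k)

lemma lampConfig_eq_mulSingle_mul [DecidableEq A] (hp : IsSparse p) (k : ℕ) (e : Fin 2) :
    lampConfig p h k e = Pi.mulSingle (p (2 * k + e)) (h k) * lampConfig p h (k + 1) e := by
  funext x
  rw [Pi.mul_apply]
  rcases eq_or_ne x (p (2 * k + e)) with rfl | hx
  · have hlate : lampConfig p h (k + 1) e (p (2 * k + e)) = 1 := by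
      by_contra hne
      obtain ⟨n, hn, hnk⟩ := exists_of_lampConfig_ne_one hne
      have := (hp.eq_of_lamp_eq hnk).1
      omega
    rw [hp.lampConfig_apply le_rfl, Pi.mulSingle_eq_same, hlate, mul_one]
  · rw [Pi.mulSingle_eq_of_ne hx, one_mul]
    by_cases hn : ∃ n, k ≤ n ∧ p (2 * n + e) = x
    · obtain ⟨n, hn, rfl⟩ := hn
      have hkn : k + 1 ≤ n := hn.lt_of_ne fun hk => hx (by rw [hk])
      rw [hp.lampConfig_apply hn, hp.lampConfig_apply hkn]
    · rw [not_imp_comm.1 exists_of_lampConfig_ne_one hn, not_imp_comm.1 exists_of_lampConfig_ne_one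
        fun ⟨n, hkn, hnx⟩ => hn ⟨n, (Nat.le_succ k).trans hkn, hnx⟩]

/-- By sparsity the translate making the lamps `h i` and `h j` meet makes no others meet. -/
lemma commutator_lampConfig [DecidableEq A] (hp : IsSparse p) {i j : ℕ} (hi : k ≤ i) (hj : k ≤ j) :
    ⁅lampConfig p h k 0, fun x => lampConfig p h k 1 ((p (2 * i) * (p (2 * j + 1))⁻¹)⁻¹ * x)⁆ =
      Pi.mulSingle (p (2 * i)) ⁅h i, h j⁆ := by
  funext x
  simp only [commutatorElement_def, Pi.mul_apply, Pi.inv_apply]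
  rcases eq_or_ne x (p (2 * i)) with rfl | hx
  · rw [mul_inv_rev, inv_inv, inv_mul_cancel_right, Pi.mulSingle_eq_same]
    rw [← hp.lampConfig_apply (h := h) (e := 0) hi, ← hp.lampConfig_apply (h := h) (e := 1) hj]
    rfl
  · rw [Pi.mulSingle_eq_of_ne hx]
    by_contra hne
    have h₀ : lampConfig p h k 0 x ≠ 1 := fun h₀ => hne (by rw [h₀]; group)
    have h₁ : lampConfig p h k 1 ((p (2 * i) * (p (2 * j + 1))⁻¹)⁻¹ * x) ≠ 1 :=
      fun h₁ => hne (by rw [h₁]; group)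
    obtain ⟨m, -, rfl⟩ := exists_of_lampConfig_ne_one h₀
    obtain ⟨n, -, hn⟩ := exists_of_lampConfig_ne_one h₁
    refine hx (congrArg (fun l => p (2 * l)) (hp.eq_of_even_odd (b := n) (d := j) ?_))
    rw [mul_inv_eq_iff_eq_mul, ← inv_mul_eq_iff_eq_mul]
    exact hn.symm

lemma commutator_mem_lampGroup [DecidableEq A] (hp : IsSparse p) {i j : ℕ} (hi : k ≤ i)
    (hj : k ≤ j) : base (Pi.mulSingle (p (2 * i)) ⁅h i, h j⁆) ∈ lampGroup p h k := by
  rw [← hp.commutator_lampConfig hi hj, map_commutatorElement, ← inl_conj_base,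
    commutatorElement_def]
  have hinl := inl_mem_lampGroup (p := p) (h := h) k (p (2 * i) * (p (2 * j + 1))⁻¹)
  have hconj := mul_mem (mul_mem hinl (base_lampConfig_mem_lampGroup k 1)) (inv_mem hinl)
  have hbase := base_lampConfig_mem_lampGroup (p := p) (h := h) k 0
  exact mul_mem (mul_mem (mul_mem hbase hconj) (inv_mem hbase)) (inv_mem hconj)

lemma mulSingle_mem_lampGroup [DecidableEq A] (hp : IsSparse p) (hh : IsTailPerfect h) (k : ℕ)
    (x : A) {w : W} (hw : w ∈ Subgroup.closure (Set.range h)) :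
    base (Pi.mulSingle x w) ∈ lampGroup p h k := by
  let single : W →* W ≀ᵣ A := base.comp (MonoidHom.mulSingle (fun _ : A => W) x)
  have hcomm : Subgroup.closure (Set.image2 (fun i j => ⁅h i, h j⁆) (Set.Ici k) (Set.Ici k)) ≤
      (lampGroup p h k).comap single := by
    rw [Subgroup.closure_le]
    rintro _ ⟨i, hi, j, hj, rfl⟩
    have hconj := mul_mem (mul_mem (inl_mem_lampGroup (p := p) (h := h) k (x * (p (2 * i))⁻¹))
      (hp.commutator_mem_lampGroup hi hj)) (inv_mem (inl_mem_lampGroup k (x * (p (2 * i))⁻¹)))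
    rwa [inl_conj_mulSingle, inv_mul_cancel_right] at hconj
  have hle : Subgroup.closure (Set.range h) ≤ (lampGroup p h k).comap single :=
    (Subgroup.closure_le _).2 (Set.range_subset_iff.2 fun m => hcomm (hh k m))
  exact hle hw

lemma lampGroup_succ (hp : IsSparse p) (hh : IsTailPerfect h) (k : ℕ) :
    lampGroup p h (k + 1) = lampGroup p h k := by
  classical
  have hk : h k ∈ Subgroup.closure (Set.range h) := Subgroup.subset_closure ⟨k, rfl⟩
  apply le_antisymm
  · refine (Subgroup.closure_le _).2 ?_
    rintro _ (⟨x, rfl⟩ | ⟨e, rfl⟩)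
    · exact inl_mem_lampGroup k x
    · have hmem := mul_mem (inv_mem (hp.mulSingle_mem_lampGroup hh k (p (2 * k + e)) hk))
        (base_lampConfig_mem_lampGroup k e)
      rwa [hp.lampConfig_eq_mulSingle_mul k e, map_mul, inv_mul_cancel_left] at hmem
  · refine (Subgroup.closure_le _).2 ?_
    rintro _ (⟨x, rfl⟩ | ⟨e, rfl⟩)
    · exact inl_mem_lampGroup (k + 1) x
    · beta_reduce
      rw [SetLike.mem_coe, hp.lampConfig_eq_mulSingle_mul k e, map_mul]
      exact mul_mem (hp.mulSingle_mem_lampGroup hh (k + 1) _ hk)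
        (base_lampConfig_mem_lampGroup (k + 1) e)

lemma lampGroup_eq (hp : IsSparse p) (hh : IsTailPerfect h) (k : ℕ) :
    lampGroup p h k = lampGroup p h 0 := by
  induction k with
  | zero => rfl
  | succ k ih => rw [hp.lampGroup_succ hh, ih]

lemma exists_finite_image_subset_zpowers (hp : IsSparse p) {D : Set A} (hD : D.Finite) :
    ∃ E : Set A, E.Finite ∧ ∀ x ∉ E, ∃ w ∈ insert 1 (Set.range h),
      Set.image2 (fun e d => lampConfig p h 0 e (d⁻¹ * x)) Set.univ D ⊆ Subgroup.zpowers w := by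
  obtain ⟨K, hK⟩ := hp.exists_forall_lt_of_finite hD
  refine ⟨Set.image2 (fun d m => d * p m) D (Set.Iio K), hD.image2 _ (Set.finite_Iio K),
    fun x hx => ?_⟩
  by_cases hall : ∀ e, ∀ d ∈ D, lampConfig p h 0 e (d⁻¹ * x) = 1
  · refine ⟨1, Set.mem_insert _ _, ?_⟩
    rintro _ ⟨e, -, d, hd, rfl⟩
    simp only [hall e d hd, SetLike.mem_coe, one_mem]
  push Not at hall
  obtain ⟨e, d, hd, hne⟩ := hall
  obtain ⟨m, -, hm⟩ := exists_of_lampConfig_ne_one hne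
  refine ⟨h m, Or.inr ⟨m, rfl⟩, ?_⟩
  rintro _ ⟨e', -, d', hd', rfl⟩
  change lampConfig p h 0 e' (d'⁻¹ * x) ∈ Subgroup.zpowers (h m)
  by_cases hne' : lampConfig p h 0 e' (d'⁻¹ * x) = 1
  · rw [hne']
    exact one_mem _
  obtain ⟨n, hn, hn'⟩ := exists_of_lampConfig_ne_one hne'
  rw [eq_inv_mul_iff_mul_eq] at hm
  have hdd : d = d' := by
    by_contra hdd
    refine hx ⟨d, hd, 2 * m + e, hK d hd d' hd' _ (2 * n + e') ?_ hdd, hm⟩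
    rw [hm, hn', mul_inv_cancel_left]
  subst hdd
  obtain ⟨rfl, rfl⟩ := hp.eq_of_lamp_eq ((eq_inv_mul_iff_mul_eq.2 hm).trans hn'.symm)
  rw [← hn', hp.lampConfig_apply hn]
  exact Subgroup.mem_zpowers _

lemma isOfFinOrder_of_mem_lampGroup (hp : IsSparse p) (hA : IsMulTorsion A)
    (hW : IsMulTorsion W) {N : ℕ} (hN : 0 < N) (hhN : ∀ n, h n ^ N = 1) {g : W ≀ᵣ A}
    (hg : g ∈ lampGroup p h 0) : IsOfFinOrder g := by
  refine isOfFinOrder_of_base_pow hA fun n => ?_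
  obtain ⟨D, hD, hleft⟩ := exists_finite_left_mem_closure (pow_mem hg n)
  obtain ⟨E, hE, hzpowers⟩ := hp.exists_finite_image_subset_zpowers (h := h) hD
  refine isOfFinOrder_pi hW hE hN fun x hx => ?_
  obtain ⟨w, hw, hsub⟩ := hzpowers x hx
  have hwN : w ^ N = 1 := by
    rcases hw with rfl | ⟨m, rfl⟩
    exacts [one_pow N, hhN m]
  obtain ⟨z, hz⟩ := Subgroup.mem_zpowers_iff.1 ((Subgroup.closure_le _).2 hsub (hleft x))
  rw [← hz, ← zpow_natCast, zpow_comm, zpow_natCast, hwN, one_zpow]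

lemma exists_commute_conj (hp : IsSparse p) {F : Set A} (hF : F.Finite) :
    ∃ k, ∀ c ∈ F, ∀ c' ∈ F, ∀ e e', Commute ((inl c)⁻¹ * base (lampConfig p h k e) * inl c)
      ((inl c')⁻¹ * base (lampConfig p h k e') * inl c') := by
  obtain ⟨k, hk⟩ := hp.exists_forall_lt_of_finite hF.inv
  refine ⟨k, fun c hc c' hc' e e' => ?_⟩
  have hconj (x : A) (a : A → W) : (inl x)⁻¹ * base a * inl x = base fun y => a (x * y) := by
    simpa using inl_conj_base x⁻¹ a
  rw [hconj, hconj]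
  refine Commute.map (f := base) (Pi.commute_iff.2 fun x => ?_)
  by_cases h₁ : lampConfig p h k e (c * x) = 1
  · rw [h₁]; exact .one_left _
  by_cases h₂ : lampConfig p h k e' (c' * x) = 1
  · rw [h₂]; exact .one_right _
  obtain ⟨m, hm, hmx⟩ := exists_of_lampConfig_ne_one h₁
  obtain ⟨n, -, hnx⟩ := exists_of_lampConfig_ne_one h₂
  have hmn : c⁻¹ * p (2 * m + e) = c'⁻¹ * p (2 * n + e') := by
    rw [hmx, hnx, inv_mul_cancel_left, inv_mul_cancel_left]
  obtain rfl : c = c' := by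
    by_contra hcc
    have := hk _ (Set.inv_mem_inv.2 hc) _ (Set.inv_mem_inv.2 hc') _ _ hmn (inv_injective.ne hcc)
    omega
  rw [(hp.eq_of_lamp_eq (mul_left_cancel hmn)).2]

end IsSparse

end Lamps

/-! ### Inducing almost invariant vectors -/

section Induced

variable {G A : Type*} [Group G] [Group A]

open Classical in
/-- The function `u ∘ r` restricted to the union of the cosets `ι a * P`, where `ι` is a section
of `r : G →* A` and `P` a subgroup of its kernel. -/
noncomputable def inducedFun (r : G →* A) (ι : A →* G) (P : Subgroup G) (u : A → ℂ) (g : G) : ℂ :=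
  if (ι (r g))⁻¹ * g ∈ P then u (r g) else 0

variable {r : G →* A} {ι : A →* G} {P : Subgroup G}

lemma inducedFun_inv_mul (hι : Function.LeftInverse r ι) (u : A → ℂ) (s : A) (g : G) :
    inducedFun r ι P u ((ι s)⁻¹ * g) = inducedFun r ι P (fun a => u (s⁻¹ * a)) g := by
  have hr : r ((ι s)⁻¹ * g) = s⁻¹ * r g := by rw [map_mul, map_inv, hι]
  have hcoset : (ι (s⁻¹ * r g))⁻¹ * ((ι s)⁻¹ * g) = (ι (r g))⁻¹ * g := by
    simp only [map_mul, map_inv]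
    group
  rw [inducedFun, inducedFun, hr, hcoset]

lemma inducedFun_inv_mul_of_mem_ker {u : A → ℂ} {f : G} (hf : f ∈ r.ker)
    (hfP : ∀ c ∈ Function.support u, (ι c)⁻¹ * f * ι c ∈ P) (g : G) :
    inducedFun r ι P u (f⁻¹ * g) = inducedFun r ι P u g := by
  have hr : r (f⁻¹ * g) = r g := by rw [map_mul, map_inv, r.mem_ker.1 hf, inv_one, one_mul]
  rw [inducedFun, inducedFun, hr]
  by_cases hg : u (r g) = 0
  · rw [hg, ite_self, ite_self]
  · have hsplit : (ι (r g))⁻¹ * (f⁻¹ * g) =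
        ((ι (r g))⁻¹ * f * ι (r g))⁻¹ * ((ι (r g))⁻¹ * g) := by group
    rw [hsplit, Subgroup.mul_mem_cancel_left _ (inv_mem (hfP _ hg))]

lemma hasSum_comp_fst {X Y : Type*} [Finite Y] {φ : X → ℝ} {c : ℝ} (h0 : ∀ x, 0 ≤ φ x)
    (hφ : HasSum φ c) : HasSum (fun q : X × Y => φ q.1) (c * Nat.card Y) := by
  have := Fintype.ofFinite Y
  have hY : HasSum (fun _ : Y => (1 : ℝ)) (Nat.card Y) := by
    simpa using hasSum_fintype fun _ : Y => (1 : ℝ)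
  have hsum : Summable fun q : X × Y => φ q.1 * (1 : ℝ) :=
    hφ.summable.mul_of_nonneg hY.summable h0 fun _ => zero_le_one
  simpa using hφ.mul hY hsum

variable [Finite P] (hι : Function.LeftInverse r ι) (hP : P ≤ r.ker)
include hι hP

lemma hasSum_norm_inducedFun (u : ℓ²(A)) :
    HasSum (fun g => ‖inducedFun r ι P u g‖ ^ (2 : ENNReal).toReal)
      (‖u‖ ^ (2 : ENNReal).toReal * Nat.card P) := by
  let j (q : A × P) : G := ι q.1 * q.2
  have hr (q : A × P) : r (j q) = q.1 := by
    rw [map_mul, hι, r.mem_ker.1 (hP q.2.2), mul_one]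
  have hj : Function.Injective j := fun q q' h => by
    have hfst : q.1 = q'.1 := by rw [← hr q, ← hr q', h]
    exact Prod.ext hfst (Subtype.ext (by simpa [j, hfst] using h))
  have hsupp : ∀ g ∉ Set.range j, ‖inducedFun r ι P u g‖ ^ (2 : ENNReal).toReal = 0 := by
    intro g hg
    rw [inducedFun, if_neg fun hgP => hg ⟨(r g, ⟨_, hgP⟩), mul_inv_cancel_left _ _⟩]
    simp
  have hcomp : (fun g => ‖inducedFun r ι P u g‖ ^ (2 : ENNReal).toReal) ∘ j =
      fun q : A × P => ‖u q.1‖ ^ (2 : ENNReal).toReal := by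
    funext q
    have hq : (ι (r (j q)))⁻¹ * j q ∈ P := by
      rw [hr, inv_mul_cancel_left]
      exact q.2.2
    rw [Function.comp_apply, inducedFun, if_pos hq, hr]
  rw [← hj.hasSum_iff hsupp, hcomp]
  exact hasSum_comp_fst (fun a => by positivity) (lp.hasSum_norm (by norm_num) u)

/-- `inducedFun` on square-summable functions. -/
noncomputable def induced (u : ℓ²(A)) : ℓ²(G) :=
  ⟨inducedFun r ι P u, memℓp_gen (hasSum_norm_inducedFun hι hP u).summable⟩

lemma norm_induced (u : ℓ²(A)) : ‖induced hι hP u‖ = ‖u‖ * √(Nat.card P) := by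
  have h2 : 0 < (2 : ENNReal).toReal := by norm_num
  rw [lp.norm_eq_tsum_rpow h2, Real.sqrt_eq_rpow]
  change (∑' g, ‖inducedFun r ι P u g‖ ^ (2 : ENNReal).toReal) ^ _ = _
  rw [(hasSum_norm_inducedFun hι hP u).tsum_eq, Real.mul_rpow (by positivity) (by positivity),
    ← Real.rpow_mul (norm_nonneg _), mul_one_div_cancel h2.ne', Real.rpow_one,
    ENNReal.toReal_ofNat]

lemma induced_sub (u v : ℓ²(A)) : induced hι hP u - induced hι hP v = induced hι hP (u - v) := by
  ext g
  change inducedFun r ι P u g - inducedFun r ι P v g = inducedFun r ι P (u - v) g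
  simp only [inducedFun, Pi.sub_apply]
  split_ifs <;> simp only [sub_zero]

lemma leftRegular_induced (s : A) (u : ℓ²(A)) :
    leftRegular (ι s) (induced hι hP u) = induced hι hP (leftRegular s u) :=
  lp.ext (funext fun g => inducedFun_inv_mul hι u s g)

lemma isAlmostInvariant_induced {S : Set A} {Φ : Set G} {ε : ℝ} {u : ℓ²(A)}
    (hu : IsAlmostInvariant S ε u) (hε : 0 < ε) (hΦ : Φ ⊆ r.ker)
    (hΦP : ∀ c ∈ Function.support u, ∀ f ∈ Φ, (ι c)⁻¹ * f * ι c ∈ P) :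
    IsAlmostInvariant (ι '' S ∪ Φ) ε (induced hι hP u) := by
  have hcard : 0 < √(Nat.card P : ℝ) := Real.sqrt_pos.2 (Nat.cast_pos.2 Nat.card_pos)
  have hpos : 0 < ‖induced hι hP u‖ := by
    rw [norm_induced]
    exact mul_pos (norm_pos_iff.2 hu.1) hcard
  refine ⟨norm_pos_iff.1 hpos, ?_⟩
  rintro f (⟨s, hs, rfl⟩ | hf)
  · rw [leftRegular_induced, induced_sub, norm_induced, norm_induced, ← mul_assoc]
    exact mul_lt_mul_of_pos_right (hu.2 s hs) hcard
  · have hinv : leftRegular f (induced hι hP u) = induced hι hP u :=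
      lp.ext (funext (inducedFun_inv_mul_of_mem_ker (hΦ hf) fun c hc => hΦP c hc f hf))
    rw [hinv, sub_self, norm_zero]
    exact mul_pos hε hpos

omit [Finite P] hP in
lemma exists_isAlmostInvariant_image_union {κ : Type*} {Φ : κ → Set G} (hΦ : ∀ k, Φ k ⊆ r.ker)
    (hfin : ∀ F : Set A, F.Finite → ∃ k,
      Finite (Subgroup.closure (Set.image2 (fun c f => (ι c)⁻¹ * f * ι c) F (Φ k))))
    {S : Set A} (hS : S.Finite) {ε : ℝ} (hε : 0 < ε) {u : ℓ²(A)} (hu : IsAlmostInvariant S ε u) :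
    ∃ k, ∃ v : ℓ²(G), IsAlmostInvariant (ι '' S ∪ Φ k) ε v := by
  obtain ⟨v, hvfin, hv⟩ := hu.exists_finite_support hS
  obtain ⟨k, hk⟩ := hfin _ hvfin
  have hker : Subgroup.closure
      (Set.image2 (fun c f => (ι c)⁻¹ * f * ι c) (Function.support v) (Φ k)) ≤ r.ker := by
    rw [Subgroup.closure_le]
    rintro _ ⟨c, -, f, hf, rfl⟩
    simpa using r.normal_ker.conj_mem f (hΦ k hf) (ι c)⁻¹
  exact ⟨k, _, isAlmostInvariant_induced hι hker hv hε (hΦ k) fun c hc f hf =>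
    Subgroup.subset_closure ⟨c, hc, f, hf, rfl⟩⟩

end Induced

/-! ### Lamp values -/

section LampValues

open RegularWreathProduct
open scoped commutatorElement

universe u v

lemma exists_infinite_fibers (α : Type*) [Countable α] [Nonempty α] :
    ∃ e : ℕ → α, ∀ a, {n | e n = a}.Infinite := by
  obtain ⟨e, he⟩ := exists_surjective_nat (α × ℕ)
  refine ⟨fun n => (e n).1, fun a hfin => ?_⟩
  refine Set.infinite_univ ((hfin.image fun n => (e n).2).subset fun j _ => ?_)
  obtain ⟨n, hn⟩ := he (a, j)
  exact ⟨n, congrArg Prod.fst hn, congrArg Prod.snd hn⟩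

lemma isTailPerfect_of_infinite_fibers {κ Q W : Type*} [Group Q] [Group W]
    (hQ : commutator Q = ⊤) (φ : κ → Q →* W) {e : ℕ → κ × Q}
    (he : ∀ a, {n | e n = a}.Infinite) : IsTailPerfect fun n => φ (e n).1 (e n).2 := by
  intro k m
  have hle : commutator Q ≤ (Subgroup.closure (Set.image2
      (fun i j => ⁅φ (e i).1 (e i).2, φ (e j).1 (e j).2⁆) (Set.Ici k) (Set.Ici k))).comap
      (φ (e m).1) := by
    rw [commutator_eq_closure, Subgroup.closure_le]
    rintro _ ⟨a, b, rfl⟩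
    obtain ⟨i, hi, hki⟩ := (he ((e m).1, a)).exists_gt k
    obtain ⟨j, hj, hkj⟩ := (he ((e m).1, b)).exists_gt k
    refine Subgroup.subset_closure ⟨i, hki.le, j, hkj.le, ?_⟩
    beta_reduce
    rw [map_commutatorElement, show e i = _ from hi, show e j = _ from hj]
  exact hle (hQ ▸ Subgroup.mem_top _)

/-- The copy of `Q` in `H ≀ᵣ Q` obtained by conjugating with the element `t` of the base group
placed at the identity. -/
noncomputable def twist {H : Type*} (Q : Type*) [Group H] [Group Q] [DecidableEq Q] (t : H) :
    Q →* H ≀ᵣ Q :=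
  (MulAut.conj (base (Pi.mulSingle 1 t) : H ≀ᵣ Q)).toMonoidHom.comp inl

lemma twist_mul_inv_left {H Q : Type*} [Group H] [Group Q] [DecidableEq Q] (t : H) {σ : Q}
    (hσ : σ ≠ 1) : (twist Q t σ * (twist Q 1 σ)⁻¹).left 1 = t := by
  simp [twist, Pi.mulSingle_apply, hσ]

lemma twist_mul_inv_right {H Q : Type*} [Group H] [Group Q] [DecidableEq Q] (t : H) (σ : Q) :
    (twist Q t σ * (twist Q 1 σ)⁻¹).right = 1 := by
  simp [twist]

/-- The lamp at the position of the cursor. -/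
def cursorLamp {W A : Type*} [Group A] (g : W ≀ᵣ A) : W := g.left g.right

lemma cursorLamp_mul {W A : Type*} [Group W] [Group A] (g : W ≀ᵣ A) {b : W ≀ᵣ A}
    (hb : b.right = 1) : cursorLamp (g * b) = cursorLamp g * b.left 1 := by
  rw [cursorLamp, cursorLamp, mul_right, hb, mul_one, mul_left, Pi.mul_apply, inv_mul_cancel]

lemma BoundedOrientation.exists_isTailPerfect {H : Type u} [Group H] (hH : IsMulTorsion H)
    {s : ℕ → H} {C : ℕ} (o : BoundedOrientation s C) {Q : Type v} [Group Q] [Finite Q]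
    [Nontrivial Q] (hQ : commutator Q = ⊤) :
    ∃ (W : Type (max u v)) (_ : Group W) (h y : ℕ → W) (N : ℕ), IsMulTorsion W ∧ 0 < N ∧
      (∀ n, h n ^ N = 1) ∧ IsTailPerfect h ∧ (∀ n, y n ∈ Subgroup.closure (Set.range h)) ∧
      Nonempty (BoundedOrientation y C) := by
  classical
  obtain ⟨e, he⟩ := exists_infinite_fibers (Option ℕ × Q)
  obtain ⟨σ, hσ⟩ := exists_ne (1 : Q)
  let φ (m : Option ℕ) : Q →* H ≀ᵣ Q := twist Q (m.elim 1 s)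
  have hmem (m : Option ℕ) : φ m σ ∈ Subgroup.closure (Set.range fun n => φ (e n).1 (e n).2) := by
    obtain ⟨n, hn⟩ := (he (m, σ)).nonempty
    exact Subgroup.subset_closure ⟨n, by beta_reduce; rw [show e n = (m, σ) from hn]⟩
  refine ⟨H ≀ᵣ Q, inferInstance, fun n => φ (e n).1 (e n).2,
    fun n => φ (some n) σ * (φ none σ)⁻¹, Nat.card Q, isMulTorsion_wreath_of_finite hH,
    Nat.card_pos, fun n => ?_, isTailPerfect_of_infinite_fibers hQ φ he,
    fun n => mul_mem (hmem _) (inv_mem (hmem _)), ⟨o.comap cursorLamp fun g n => ?_⟩⟩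
  · rw [← map_pow, pow_card_eq_one', map_one]
  · exact (cursorLamp_mul g (twist_mul_inv_right _ σ)).trans
      (congrArg _ (twist_mul_inv_left (s n) hσ))

end LampValues

/-! ### The lamp group -/

section LampGroup

open RegularWreathProduct

/-- `A` as a subgroup of a lamp group. -/
noncomputable def lampGroupInl {A W : Type*} [Group A] [Group W] (p : ℕ → A) (h : ℕ → W) :
    A →* lampGroup p h 0 :=
  inl.codRestrict _ (inl_mem_lampGroup 0)

/-- The projection of a lamp group onto the group `A` of cursor positions. -/
noncomputable def lampGroupProj {A W : Type*} [Group A] [Group W] (p : ℕ → A) (h : ℕ → W) :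
    lampGroup p h 0 →* A :=
  rightHom.comp (Subgroup.subtype _)

/-- The two lamp configurations starting at `k`, as elements of the lamp group. -/
def lateLamps {A W : Type*} [Group A] [Group W] (p : ℕ → A) (h : ℕ → W) (k : ℕ) :
    Set (lampGroup p h 0) :=
  Subtype.val ⁻¹' Set.range fun e => base (lampConfig p h k e)

variable {A W : Type*} [Group A] [Group W] {p : ℕ → A} {h : ℕ → W}

lemma finite_lateLamps (k : ℕ) : (lateLamps p h k).Finite :=
  (Set.finite_range _).preimage Subtype.val_injective.injOn

lemma lateLamps_subset_ker (k : ℕ) : lateLamps p h k ⊆ (lampGroupProj p h).ker := by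
  rintro f ⟨e, he⟩
  change (f : W ≀ᵣ A).right = 1
  rw [← he, base_right]

lemma closure_image_union_lateLamps (hp : IsSparse p) (hh : IsTailPerfect h) {S : Set A}
    (hS : Subgroup.closure S = ⊤) (k : ℕ) :
    Subgroup.closure (lampGroupInl p h '' S ∪ lateLamps p h k) = ⊤ := by
  have hrange : Set.range (fun e => base (lampConfig p h k e)) ⊆
      Set.range (Subtype.val : lampGroup p h 0 → W ≀ᵣ A) := by
    rw [Subtype.range_coe, Set.range_subset_iff, ← hp.lampGroup_eq hh k]
    exact base_lampConfig_mem_lampGroup k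
  have himage : Subtype.val '' (lampGroupInl p h '' S) = (inl '' S : Set (W ≀ᵣ A)) :=
    Set.image_image _ _ _
  apply Subgroup.map_injective (lampGroup p h 0).subtype_injective
  rw [MonoidHom.map_closure, Subgroup.coe_subtype, Set.image_union, himage, lateLamps,
    Set.image_preimage_eq_of_subset hrange, Subgroup.closure_union, ← MonoidHom.map_closure, hS,
    ← MonoidHom.range_eq_map, ← MonoidHom.range_eq_map, Subgroup.range_subtype,
    ← hp.lampGroup_eq hh k, lampGroup, Subgroup.closure_union, ← MonoidHom.coe_range,
    Subgroup.closure_eq]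

lemma finite_closure_of_commute {G : Type*} [Group G] (hG : IsMulTorsion G) {B : Set G}
    (hB : B.Finite) (hcomm : ∀ x ∈ B, ∀ y ∈ B, Commute x y) : Finite (Subgroup.closure B) := by
  have := Subgroup.isMulCommutative_closure hcomm
  have := hB.to_subtype
  have : Group.FG (Subgroup.closure B) := Group.closure_finite_fg B
  exact @CommGroup.finite_of_fg_isMulTorsion _ (IsMulCommutative.instCommGroup ..)
    this (hG.subgroup _)

lemma exists_finite_closure_conj_lateLamps (hp : IsSparse p) (hK : IsMulTorsion (lampGroup p h 0))
    {F : Set A} (hF : F.Finite) : ∃ k, Finite (Subgroup.closure (Set.image2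
      (fun c f => (lampGroupInl p h c)⁻¹ * f * lampGroupInl p h c) F (lateLamps p h k))) := by
  obtain ⟨k, hk⟩ := hp.exists_commute_conj (h := h) hF
  refine ⟨k, finite_closure_of_commute hK (hF.image2 _ (finite_lateLamps k)) ?_⟩
  rintro _ ⟨c, hc, f, ⟨e, hf⟩, rfl⟩ _ ⟨c', hc', f', ⟨e', hf'⟩, rfl⟩
  refine Subtype.ext ?_
  have := hk c hc c' hc' e e'
  beta_reduce at hf hf'
  rwa [hf, hf'] at this

end LampGroup

/-- There exists a finitely generated torsion group that is not unitarizable (hence has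
no non-abelian free subgroup) and is weakly amenable: for every `ε > 0` there are a
finite generating set `X` and a unit vector `u ∈ ℓ²(G)` with `‖λ(x)u - u‖ < ε` for all
`x ∈ X`. -/
theorem exists_fg_torsion_not_unitarizable_weakly_amenable :
    ∃ (G : Type) (_ : Group G), Group.FG G ∧ Monoid.IsTorsion G ∧ ¬ Unitarizable G ∧
      ∀ ε : ℝ, 0 < ε → ∃ X : Finset G, Subgroup.closure (X : Set G) = ⊤ ∧
        ∃ u : lp (fun _ : G => ℂ) 2, ‖u‖ = 1 ∧
          ∀ x ∈ X, ‖leftRegular x u - u‖ < ε := by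
  classical
  obtain ⟨H, _, s, hH, ⟨o⟩⟩ := exists_isPGroup_boundedOrientation 2
  have hHtors : IsMulTorsion H := fun g =>
    isOfFinOrder_iff_pow_eq_one.2 ((hH g).imp' (2 ^ ·) fun n hn => ⟨by positivity, hn⟩)
  obtain ⟨A, _, S, hSfin, hS, hA, _, hinv⟩ :=
    Grigorchuk.exists_infinite_isMulTorsion_isAlmostInvariant
  have hA₅ : commutator (alternatingGroup (Fin 5)) = ⊤ :=
    commutator_alternatingGroup_eq_top (by simp)
  obtain ⟨W, _, h, y, N, hW, hN, hhN, hh, hy, ⟨o'⟩⟩ := o.exists_isTailPerfect hHtors hA₅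
  obtain ⟨p, hp⟩ := IsSparse.exists_of_infinite (A := A)
  have htors : IsMulTorsion (lampGroup p h 0) := fun g =>
    Submonoid.isOfFinOrder_coe.1 (hp.isOfFinOrder_of_mem_lampGroup hA hW hN hhN g.2)
  have hX (k : ℕ) : (lampGroupInl p h '' S ∪ lateLamps p h k).Finite :=
    (hSfin.image _).union (finite_lateLamps k)
  have hgen := closure_image_union_lateLamps hp hh hS
  refine ⟨lampGroup p h 0, inferInstance, Group.fg_iff.2 ⟨_, hgen 0, hX 0⟩, htors, ?_,
    fun ε hε => ?_⟩
  · refine (o'.comap (t := fun n => ⟨_, hp.mulSingle_mem_lampGroup hh 0 1 (hy n)⟩)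
      (fun g => cursorLamp g.1) fun g n => ?_).not_unitarizable
    simpa using cursorLamp_mul (g : W ≀ᵣ A) (base_right (Pi.mulSingle 1 (y n)))
  · obtain ⟨u, hu⟩ := hinv ε hε
    obtain ⟨k, v, hv⟩ := exists_isAlmostInvariant_image_union (r := lampGroupProj p h)
      (fun a => rfl) lateLamps_subset_ker
      (fun F hF => exists_finite_closure_conj_lateLamps hp htors hF) hSfin hε hu
    exact ⟨(hX k).toFinset, by rw [(hX k).coe_toFinset, hgen k], by
      simpa only [(hX k).mem_toFinset] using hv.exists_norm_eq_one⟩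
end

section
/- (Day–Dixmier) Every amenable group is unitarizable: if a group G admits a left-invariant mean on the space of bounded complex-valued functions on G, then every uniformly bounded representation of G on a complex Hilbert space is unitarizable. -/
open scoped ENNReal

/-- Left translation action of `G` on `ℓ∞(G)` (bounded real-valued functions on `G`):
`(g · f)(h) = f(g⁻¹ h)`. -/
noncomputable def leftTranslate {G : Type*} [Group G] (g : G)
    (f : lp (fun _ : G => ℝ) ∞) : lp (fun _ : G => ℝ) ∞ :=
  ⟨fun h => f (g⁻¹ * h), by
    have hf : BddAbove (Set.range fun i : G => ‖f i‖) :=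
      memℓp_infty_iff.mp (lp.memℓp f)
    refine memℓp_infty ?_
    have : (Set.range fun h : G => ‖f (g⁻¹ * h)‖) = Set.range fun i : G => ‖f i‖ := by
      rw [show (fun h : G => ‖f (g⁻¹ * h)‖) =
        (fun i : G => ‖f i‖) ∘ (Equiv.mulLeft g⁻¹) from rfl]
      exact Function.Surjective.range_comp (Equiv.mulLeft g⁻¹).surjective _
    rwa [this]⟩

/-- A group `G` is *amenable* if there is a left-invariant mean on `ℓ∞(G)`: a linear
functional `m` with `m 1 = 1`, `m f ≥ 0` for pointwise nonnegative `f`, and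
`m (g · f) = m f` for every `g ∈ G`. -/
def IsAmenable (G : Type*) [Group G] : Prop :=
  ∃ m : lp (fun _ : G => ℝ) ∞ →ₗ[ℝ] ℝ,
    m 1 = 1 ∧ (∀ f, (∀ h : G, 0 ≤ f h) → 0 ≤ m f) ∧
      ∀ (g : G) (f), m (leftTranslate g f) = m f

/-!
Average the Hilbert norms along the orbits: for a uniformly bounded representation `π` and a mean
`m` on `G`, the form `q x = m (h ↦ ‖π h⁻¹ x‖ ^ 2)` is comparable to `‖x‖ ^ 2`, and left invariance
of `m` gives `q (π g x) = q x`. Since `q` comes from a bounded sesquilinear form, the average of the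
pulled back inner products, it equals `⟪A x, x⟫` for a positive invertible operator `A`. Factoring
`A = T† T` with `T` invertible yields `‖T x‖ ^ 2 = q x`, so that `T (π g) T⁻¹` is isometric.
-/

theorem exists_continuousLinearEquiv_norm_sq_eq_of_coercive {E : Type*} [NormedAddCommGroup E]
    [InnerProductSpace ℂ E] [CompleteSpace E] {A : E →L[ℂ] E} {q : E → ℝ} {c : ℝ}
    (hA : ∀ x, inner ℂ (A x) x = q x) (hc : 0 < c) (hq : ∀ x, c * ‖x‖ ^ 2 ≤ q x) :
    ∃ T : E ≃L[ℂ] E, ∀ x, ‖T x‖ ^ 2 = q x := by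
  have hq_nonneg (x : E) : 0 ≤ q x := le_trans (by positivity) (hq x)
  have hA_nonneg : 0 ≤ A := by
    rw [ContinuousLinearMap.nonneg_iff_isPositive, ContinuousLinearMap.isPositive_iff_complex]
    intro x
    simpa [hA] using hq_nonneg x
  have hA_unit : IsUnit A :=
    ContinuousLinearMap.isUnit_of_forall_le_norm_inner_map A (c := ⟨c, hc.le⟩) hc fun x => by
      rw [hA, Complex.norm_real, Real.norm_of_nonneg (hq_nonneg x), mul_comm]
      exact hq x
  obtain ⟨_, ⟨T, rfl⟩, hT⟩ := CStarAlgebra.isStrictlyPositive_iff_eq_star_mul_self.1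
    (hA_unit.isStrictlyPositive hA_nonneg)
  refine ⟨ContinuousLinearEquiv.ofUnit T, fun x => ?_⟩
  calc ‖(T : E →L[ℂ] E) x‖ ^ 2
      = (inner ℂ (A x) x).re := by
        rw [hT]
        exact ContinuousLinearMap.apply_norm_sq_eq_inner_adjoint_left _ x
    _ = q x := by rw [hA, Complex.ofReal_re]

section BoundedFunctions

open scoped lp

variable {ι : Type*}

section Family

variable {𝕜 E F : Type*} [NontriviallyNormedField 𝕜] [NormedAddCommGroup E] [NormedSpace 𝕜 E]
  [NormedAddCommGroup F] [NormedSpace 𝕜 F]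

/-- A uniformly bounded family of operators `T i`, assembled into the single operator
`x ↦ (T i x)ᵢ` with values in the bounded functions. -/
noncomputable def lpInftyPi (T : ι → E →L[𝕜] F) {C : ℝ} (hC : 0 ≤ C) (hT : ∀ i, ‖T i‖ ≤ C) :
    E →L[𝕜] ℓ^∞(ι, F) :=
  LinearMap.mkContinuous
    { toFun := fun x => ⟨fun i => T i x, memℓp_infty ⟨C * ‖x‖, by
        rintro _ ⟨i, rfl⟩
        exact (T i).le_of_opNorm_le (hT i) x⟩⟩
      map_add' := fun x y => by ext i; exact map_add (T i) x y
      map_smul' := fun c x => by ext i; exact map_smul (T i) c x }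
    C fun x => lp.norm_le_of_forall_le (by positivity) fun i => (T i).le_of_opNorm_le (hT i) x

end Family

variable {𝕜 F : Type*} [RCLike 𝕜]

variable (ι 𝕜) in
/-- The pointwise real part of bounded functions, as a continuous `ℝ`-linear map. -/
noncomputable def lpInftyRe : ℓ^∞(ι, 𝕜) →L[ℝ] ℓ^∞(ι, ℝ) :=
  lp.mapCLM ∞ (fun _ => RCLike.reCLM) zero_le_one fun _ => (RCLike.reCLM_norm (K := 𝕜)).le

@[simp]
theorem lpInftyRe_apply (f : ℓ^∞(ι, 𝕜)) (i : ι) : lpInftyRe ι 𝕜 f i = RCLike.re (f i) := rfl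

variable [NormedAddCommGroup F] [InnerProductSpace 𝕜 F]

theorem norm_inner_apply_le (u v : ℓ^∞(ι, F)) (i : ι) : ‖inner 𝕜 (u i) (v i)‖ ≤ ‖u‖ * ‖v‖ :=
  (norm_inner_le_norm _ _).trans <|
    mul_le_mul (lp.norm_apply_le_norm ENNReal.top_ne_zero u i)
      (lp.norm_apply_le_norm ENNReal.top_ne_zero v i) (norm_nonneg _) (norm_nonneg _)

variable (𝕜) in
/-- The pointwise inner product `i ↦ ⟪u i, v i⟫` of two bounded vector-valued functions. -/
def pointwiseInner (u v : ℓ^∞(ι, F)) : ℓ^∞(ι, 𝕜) :=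
  ⟨fun i => inner 𝕜 (u i) (v i), memℓp_infty ⟨‖u‖ * ‖v‖, by
    rintro _ ⟨i, rfl⟩
    exact norm_inner_apply_le u v i⟩⟩

@[simp]
theorem pointwiseInner_apply (u v : ℓ^∞(ι, F)) (i : ι) :
    pointwiseInner 𝕜 u v i = inner 𝕜 (u i) (v i) := rfl

variable (ι 𝕜 F) in
/-- The pointwise inner product as a continuous sesquilinear map, conjugate-linear in the first
variable. -/
noncomputable def pointwiseInnerSL : ℓ^∞(ι, F) →L⋆[𝕜] ℓ^∞(ι, F) →L[𝕜] ℓ^∞(ι, 𝕜) :=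
  LinearMap.mkContinuous₂
    (LinearMap.mk₂'ₛₗ (starRingEnd 𝕜) (RingHom.id 𝕜) (pointwiseInner 𝕜)
      (fun _ _ _ => by ext; simp [inner_add_left])
      (fun _ _ _ => by ext; simp [inner_smul_left])
      (fun _ _ _ => by ext; simp [inner_add_right])
      (fun _ _ _ => by ext; simp [inner_smul_right]))
    1 fun u v => by
      rw [one_mul]
      exact lp.norm_le_of_forall_le (by positivity) (norm_inner_apply_le u v)

@[simp]
theorem pointwiseInnerSL_apply (u v : ℓ^∞(ι, F)) :
    pointwiseInnerSL ι 𝕜 F u v = pointwiseInner 𝕜 u v := rfl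

/-- A *mean* on a set `ι`: a positive linear functional on `ℓ∞(ι)`, normalized by `m 1 = 1`. -/
structure IsMean (m : ℓ^∞(ι, ℝ) →ₗ[ℝ] ℝ) : Prop where
  map_one : m 1 = 1
  map_nonneg : ∀ f : ℓ^∞(ι, ℝ), (∀ i, 0 ≤ f i) → 0 ≤ m f

namespace IsMean

variable {m : ℓ^∞(ι, ℝ) →ₗ[ℝ] ℝ}

theorem le_apply (hm : IsMean m) {f : ℓ^∞(ι, ℝ)} {c : ℝ} (hf : ∀ i, c ≤ f i) : c ≤ m f := by
  have h : 0 ≤ m (f - c • 1) := hm.map_nonneg _ fun i => by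
    rw [lp.coeFn_sub, lp.coeFn_smul, lp.infty_coeFn_one]
    simpa using hf i
  simpa [hm.map_one] using h

theorem norm_apply_le (hm : IsMean m) (f : ℓ^∞(ι, ℝ)) : ‖m f‖ ≤ ‖f‖ := by
  have hf (i : ι) : |f i| ≤ ‖f‖ := lp.norm_apply_le_norm ENNReal.top_ne_zero f i
  have hlower : -‖f‖ ≤ m f := hm.le_apply fun i => (abs_le.1 (hf i)).1
  have hupper : -‖f‖ ≤ m (-f) := hm.le_apply fun i => neg_le_neg (abs_le.1 (hf i)).2
  rw [map_neg] at hupper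
  exact abs_le.2 ⟨hlower, neg_le_neg_iff.1 hupper⟩

variable (𝕜) in
/-- The `𝕜`-linear extension of a mean from the real-valued to the `𝕜`-valued bounded functions. -/
noncomputable def extendRCLike (hm : IsMean m) : StrongDual 𝕜 ℓ^∞(ι, 𝕜) :=
  StrongDual.extendRCLike <|
    m.mkContinuous 1 (fun f => by simpa using hm.norm_apply_le f) ∘L lpInftyRe ι 𝕜

theorem extendRCLike_eq_ofReal (hm : IsMean m) {f : ℓ^∞(ι, 𝕜)} {g : ℓ^∞(ι, ℝ)}
    (hfg : ∀ i, f i = g i) : hm.extendRCLike 𝕜 f = m g := by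
  have hre : lpInftyRe ι 𝕜 f = g := by ext i; simp [hfg]
  have him : lpInftyRe ι 𝕜 ((RCLike.I : 𝕜) • f) = 0 := by ext i; simp [hfg]
  simp [extendRCLike, StrongDual.extendRCLike_apply, hre, him]

variable (𝕜 F) in
/-- The semi-inner product on the bounded `F`-valued functions that averages the pointwise inner
product against a mean, as a continuous sesquilinear form. -/
noncomputable def averagedInner (hm : IsMean m) : ℓ^∞(ι, F) →L⋆[𝕜] ℓ^∞(ι, F) →L[𝕜] 𝕜 :=
  (hm.extendRCLike 𝕜).postcomp ℓ^∞(ι, F) ∘SL pointwiseInnerSL ι 𝕜 F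

theorem averagedInner_self (hm : IsMean m) (u : ℓ^∞(ι, F)) :
    hm.averagedInner 𝕜 F u u = m (lp.toNorm u ^ 2) :=
  hm.extendRCLike_eq_ofReal fun i => by simp

theorem exists_continuousLinearEquiv_norm_sq_eq {E F : Type*} [NormedAddCommGroup E]
    [InnerProductSpace ℂ E] [CompleteSpace E] [NormedAddCommGroup F] [InnerProductSpace ℂ F]
    (hm : IsMean m) (U : E →L[ℂ] ℓ^∞(ι, F)) {c : ℝ} (hc : 0 < c)
    (hU : ∀ x i, c * ‖x‖ ≤ ‖U x i‖) :
    ∃ T : E ≃L[ℂ] E, ∀ x, ‖T x‖ ^ 2 = m (lp.toNorm (U x) ^ 2) := by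
  let B : E →L⋆[ℂ] E →L[ℂ] ℂ := (hm.averagedInner ℂ F).bilinearComp U U
  refine exists_continuousLinearEquiv_norm_sq_eq_of_coercive
    (A := InnerProductSpace.continuousLinearMapOfBilin B) (fun x => ?_) (sq_pos_of_pos hc)
    fun x => hm.le_apply fun i => ?_
  · rw [InnerProductSpace.continuousLinearMapOfBilin_apply]
    exact hm.averagedInner_self (U x)
  · rw [← mul_pow]
    exact pow_le_pow_left₀ (by positivity) (hU x i) 2

end IsMean

end BoundedFunctions

section Representation

open scoped lp

variable {G : Type*} [Group G] {𝕜 E : Type*} [NontriviallyNormedField 𝕜] [NormedAddCommGroup E]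
  [NormedSpace 𝕜 E] {π : G →* (E ≃L[𝕜] E)} {C : ℝ}

theorem inv_mul_norm_le_norm_rep_apply (hC : 0 < C) (hπ : ∀ g, ‖(π g : E →L[𝕜] E)‖ ≤ C) (g : G)
    (x : E) : C⁻¹ * ‖x‖ ≤ ‖π g x‖ := by
  rw [inv_mul_le_iff₀ hC]
  calc ‖x‖ = ‖π g⁻¹ (π g x)‖ := by
        rw [map_inv]
        exact congrArg norm ((π g).symm_apply_apply x).symm
    _ ≤ C * ‖π g x‖ := (π g⁻¹ : E →L[𝕜] E).le_of_opNorm_le (hπ g⁻¹) _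

/-- The orbit map `x ↦ (π h⁻¹ x)ₕ` of a uniformly bounded representation. The inverse makes it
intertwine `π` with left translation. -/
noncomputable def orbitMap (hC : 0 ≤ C) (hπ : ∀ g, ‖(π g : E →L[𝕜] E)‖ ≤ C) :
    E →L[𝕜] ℓ^∞(G, E) :=
  lpInftyPi (fun h => (π h⁻¹ : E →L[𝕜] E)) hC fun h => hπ h⁻¹

@[simp]
theorem orbitMap_apply (hC : 0 ≤ C) (hπ : ∀ g, ‖(π g : E →L[𝕜] E)‖ ≤ C) (x : E) (h : G) :
    orbitMap hC hπ x h = π h⁻¹ x := rfl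

theorem orbitMap_rep_apply (hC : 0 ≤ C) (hπ : ∀ g, ‖(π g : E →L[𝕜] E)‖ ≤ C) (g : G) (x : E)
    (h : G) : orbitMap hC hπ (π g x) h = orbitMap hC hπ x (g⁻¹ * h) := by
  rw [orbitMap_apply, orbitMap_apply, mul_inv_rev, inv_inv, map_mul]
  rfl

theorem toNorm_orbitMap_rep_sq (hC : 0 ≤ C) (hπ : ∀ g, ‖(π g : E →L[𝕜] E)‖ ≤ C) (g : G) (x : E) :
    lp.toNorm (orbitMap hC hπ (π g x)) ^ 2 =
      leftTranslate g (lp.toNorm (orbitMap hC hπ x) ^ 2) := by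
  ext h
  exact congrArg (‖·‖ ^ 2) (orbitMap_rep_apply hC hπ g x h)

end Representation

theorem unitarizable_of_amenable_general {G : Type*} [Group G] (hG : IsAmenable G) {E : Type*}
    [NormedAddCommGroup E] [InnerProductSpace ℂ E] [CompleteSpace E] {π : G →* (E ≃L[ℂ] E)}
    (hπ : UniformlyBoundedRep π) : IsUnitarizableRep π := by
  obtain ⟨m, hone, hpos, hinv⟩ := hG
  have hm : IsMean m := ⟨hone, hpos⟩
  obtain ⟨C, hC_pos, hC⟩ : ∃ C > 0, ∀ g, ‖(π g : E →L[ℂ] E)‖ ≤ C :=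
    hπ.elim fun C hC => ⟨max C 1, by positivity, fun g => (hC g).trans (le_max_left C 1)⟩
  obtain ⟨T, hT⟩ := hm.exists_continuousLinearEquiv_norm_sq_eq (orbitMap hC_pos.le hC)
    (inv_pos.2 hC_pos) fun x h => inv_mul_norm_le_norm_rep_apply hC_pos hC h⁻¹ x
  have hT_inv (g : G) (x : E) : ‖T (π g x)‖ = ‖T x‖ := by
    rw [← sq_eq_sq₀ (norm_nonneg _) (norm_nonneg _), hT, hT, toNorm_orbitMap_rep_sq, hinv]
  exact ⟨T.symm, fun g v => by simp [hT_inv]⟩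

/-- (Day–Dixmier) Every amenable group is unitarizable. -/
theorem unitarizable_of_amenable {G : Type*} [Group G] (hG : IsAmenable G) :
    Unitarizable G :=
  fun _ _ _ _ _ hπ => unitarizable_of_amenable_general hG hπ
end
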